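/- A series-parallel graph G is minimally 1/2-tough if and only if G is a series connection of an arbitrary number of pearls and at least two single edges, in which the first and last constituents of the series connection are edges. Consequently, every minimally 1/2-tough series-parallel graph has a vertex of degree 1. -/

import Mathlib

open SimpleGraph

noncomputable def numComp {V : Type*} (G : SimpleGraph V) (S : Set V) : ℕ :=
  Nat.card (SimpleGraph.induce Sᶜ G).ConnectedComponent

def IsCutset {V : Type*} (G : SimpleGraph V) (S : Set V) : Prop := 1 < numComp G S

noncomputable def toughness {V : Type*} (G : SimpleGraph V) : ℝ :=
  sInf {r : ℝ | ∃ S : Set V, IsCutset G S ∧ r = (S.ncard : ℝ) / (numComp G S : ℝ)}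

def IsToughSet {V : Type*} (G : SimpleGraph V) (S : Set V) : Prop :=
  IsCutset G S ∧ (S.ncard : ℝ) = toughness G * (numComp G S : ℝ)

def MinTough {V : Type*} (G : SimpleGraph V) (t : ℝ) : Prop :=
  toughness G = t ∧ ∀ e ∈ G.edgeSet, toughness (G.deleteEdges {e}) < t

def IsCutVertex {V : Type*} (G : SimpleGraph V) (x : V) : Prop := IsCutset G {x}

inductive SPTree (V : Type*) where
  | edge (u v : V) : SPTree V
  | series (l r : SPTree V) : SPTree V
  | parallel (l r : SPTree V) : SPTree V

namespace SPTree

def src {V : Type*} : SPTree V → V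
  | edge u _ => u
  | series l _ => l.src
  | parallel l _ => l.src

def tgt {V : Type*} : SPTree V → V
  | edge _ v => v
  | series _ r => r.tgt
  | parallel l _ => l.tgt

def verts {V : Type*} : SPTree V → Set V
  | edge u v => {u, v}
  | series l r => l.verts ∪ r.verts
  | parallel l r => l.verts ∪ r.verts

def edges {V : Type*} : SPTree V → Set (Sym2 V)
  | edge u v => {s(u, v)}
  | series l r => l.edges ∪ r.edges
  | parallel l r => l.edges ∪ r.edges

def WF {V : Type*} : SPTree V → Prop
  | edge u v => u ≠ v
  | series l r => l.WF ∧ r.WF ∧ l.tgt = r.src ∧ l.verts ∩ r.verts = {l.tgt}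
  | parallel l r => l.WF ∧ r.WF ∧ l.src = r.src ∧ l.tgt = r.tgt ∧
      l.verts ∩ r.verts = {l.src, l.tgt} ∧ Disjoint l.edges r.edges

end SPTree

/-- `G` is the series-parallel graph given by the (well-formed, spanning) sp-tree `T`. -/
def RepresentsSP {V : Type*} (G : SimpleGraph V) (T : SPTree V) : Prop :=
  T.WF ∧ T.verts = Set.univ ∧ G = SimpleGraph.fromEdgeSet T.edges

def IsSPGraph {V : Type*} (G : SimpleGraph V) : Prop := ∃ T : SPTree V, RepresentsSP G T

/-- `IsPathT t n` : the sp-tree `t` is a series join of edges forming a path of length `n`. -/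
inductive IsPathT {V : Type*} : SPTree V → ℕ → Prop
  | edge (u v : V) : IsPathT (.edge u v) 1
  | series {l r : SPTree V} {m n : ℕ} : IsPathT l m → IsPathT r n → IsPathT (.series l r) (m + n)

/-- `R₂` : the parallel join of two paths of length 2. -/
def IsR2 {V : Type*} (t : SPTree V) : Prop :=
  ∃ l r : SPTree V, t = .parallel l r ∧ IsPathT l 2 ∧ IsPathT r 2

/-- A pearl: the parallel join of two paths, each of length at least 2. -/
def IsPearl {V : Type*} (t : SPTree V) : Prop :=
  ∃ (l r : SPTree V) (m n : ℕ),
    t = .parallel l r ∧ IsPathT l m ∧ IsPathT r n ∧ 2 ≤ m ∧ 2 ≤ n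

/-- A tail of a pearl-necklace: a series join of single edges and pearls whose last
constituent is a single edge. -/
inductive PearlTail {V : Type*} : SPTree V → Prop
  | base (u v : V) : PearlTail (.edge u v)
  | consEdge (u v : V) {r : SPTree V} : PearlTail r → PearlTail (.series (.edge u v) r)
  | consPearl {p r : SPTree V} : IsPearl p → PearlTail r → PearlTail (.series p r)

/-- A series connection of pearls and at least two single edges, in which the first and
last constituents are single edges. -/
def IsPearlNecklace {V : Type*} (T : SPTree V) : Prop :=
  ∃ (u v : V) (r : SPTree V), T = .series (.edge u v) r ∧ PearlTail r

/-!
A deletion of vertices in a two-terminal graph affects the rest of a graph only through the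
deleted terminals, the connectedness of the remaining ones and the balance of components won against
vertices spent. The sets of all such effects glue along series and parallel joins, so it makes sense
to ask whether a piece is tough in the environment formed by the rest of the graph. Minimality
passes to every piece in its environment, and by induction every piece is a chain of single edges
and pearls: any other parallel join has an edge whose deletion is never noticed in its environment.
For the same reason neither end of the whole chain can be a pearl, in which the edges at the outer
terminal would be superfluous. Conversely, in a pearl necklace every edge deletion creates a cheap
way to separate the outer terminals.
-/

/-- The possible effects of deleting vertices from a graph with two terminals, for use in gluing
arguments. `X i j c t w` says that some set of vertices
* contains the source iff `i` and the target iff `j`,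
* leaves the terminals present and connected iff `c`,
* contains a vertex other than the terminals iff `t`, and
* has *gain* `w`: the number of remaining components without a terminal, minus twice the number of
  deleted vertices other than the terminals. -/
@[ext]
structure Profiles where
  /-- The underlying relation. -/
  Mem (i j c t : Bool) (w : ℤ) : Prop
  sound {i j t : Bool} {w : ℤ} : Mem i j true t w → i = false ∧ j = false
  nonneg {i j c : Bool} {w : ℤ} : Mem i j c false w → 0 ≤ w

namespace Profiles

theorem toInt_nonneg (b : Bool) : 0 ≤ b.toInt := by decide +revert

theorem toInt_le_one (b : Bool) : b.toInt ≤ 1 := by decide +revert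

grind_pattern toInt_nonneg => b.toInt
grind_pattern toInt_le_one => b.toInt

instance : CoeFun Profiles fun _ => Bool → Bool → Bool → Bool → ℤ → Prop := ⟨Mem⟩

variable {X Y O : Profiles} {i j c t : Bool} {w n : ℤ}

theorem conn_eq_false_of_src (h : X true j c t w) : c = false := by
  cases c
  · rfl
  · exact absurd (X.sound h).1 (by decide)

theorem conn_eq_false_of_tgt (h : X i true c t w) : c = false := by
  cases c
  · rfl
  · exact absurd (X.sound h).2 (by decide)

/-- Profiles of a single edge that is present iff `a` holds. -/
def single (a : Bool) : Profiles where
  Mem i j c t w := c = (a && !i && !j) ∧ t = false ∧ w = 0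
  sound := by rintro i j _ _ ⟨h, -, -⟩; simp_all
  nonneg := by rintro _ _ _ _ ⟨-, -, rfl⟩; exact le_rfl

/-- Profiles of a series join; `k` records whether the common terminal is deleted. -/
def ser (X Y : Profiles) : Profiles where
  Mem i j c t w := ∃ k c₁ t₁ w₁ c₂ t₂ w₂, X i k c₁ t₁ w₁ ∧ Y k j c₂ t₂ w₂ ∧
    c = (c₁ && c₂) ∧ t = (t₁ || t₂ || k) ∧ w = w₁ + w₂ + (!(k || c₁ || c₂)).toInt - 2 * k.toInt
  sound := by
    rintro i j _ _ ⟨k, c₁, _, _, c₂, _, _, hX, hY, hc, -, -⟩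
    obtain ⟨rfl, rfl⟩ : c₁ = true ∧ c₂ = true := by simpa using hc.symm
    exact ⟨(X.sound hX).1, (Y.sound hY).2⟩
  nonneg := by
    rintro i j _ _ ⟨k, c₁, t₁, w₁, c₂, t₂, w₂, hX, hY, -, ht, rfl⟩
    obtain ⟨⟨rfl, rfl⟩, rfl⟩ : (t₁ = false ∧ t₂ = false) ∧ k = false := by simpa using ht.symm
    have := X.nonneg hX
    have := Y.nonneg hY
    cases c₁ <;> cases c₂ <;> simp <;> omega

/-- Profiles of a parallel join. -/
def par (X Y : Profiles) : Profiles where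
  Mem i j c t w := ∃ c₁ t₁ w₁ c₂ t₂ w₂, X i j c₁ t₁ w₁ ∧ Y i j c₂ t₂ w₂ ∧
    c = (c₁ || c₂) ∧ t = (t₁ || t₂) ∧ w = w₁ + w₂
  sound := by
    rintro i j _ _ ⟨c₁, _, _, c₂, _, _, hX, hY, hc, -, -⟩
    obtain rfl | rfl : c₁ = true ∨ c₂ = true := by simpa using hc.symm
    exacts [X.sound hX, Y.sound hY]
  nonneg := by
    rintro i j _ _ ⟨_, t₁, _, _, t₂, _, hX, hY, -, ht, rfl⟩
    obtain ⟨rfl, rfl⟩ : t₁ = false ∧ t₂ = false := by simpa using ht.symm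
    exact add_nonneg (X.nonneg hX) (Y.nonneg hY)

/-- Profiles after exchanging the terminals. -/
def rev (X : Profiles) : Profiles where
  Mem i j := X j i
  sound h := (X.sound h).symm
  nonneg h := X.nonneg h

/-- Profiles of the graph that consists of two isolated terminals. -/
abbrev isolated : Profiles := single false

theorem rev_ser (X Y : Profiles) : (X.ser Y).rev = Y.rev.ser X.rev := by
  ext i j c t w
  constructor <;>
  · rintro ⟨k, c₁, t₁, w₁, c₂, t₂, w₂, h₁, h₂, rfl, rfl, rfl⟩
    refine ⟨k, c₂, t₂, w₂, c₁, t₁, w₁, h₂, h₁, Bool.and_comm _ _, ?_, ?_⟩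
    · rw [Bool.or_comm t₁]
    · rw [Bool.or_right_comm, add_comm w₁]

theorem par_comm (X Y : Profiles) : X.par Y = Y.par X := by
  ext i j c t w
  constructor <;>
  · rintro ⟨c₁, t₁, w₁, c₂, t₂, w₂, h₁, h₂, rfl, rfl, rfl⟩
    exact ⟨c₂, t₂, w₂, c₁, t₁, w₁, h₂, h₁, Bool.or_comm _ _, Bool.or_comm _ _, add_comm _ _⟩

/-- The graph obtained by gluing `X` and its environment `O` along both terminals has at most
`max 1 (2 * |S|)` components after deletion of any vertex set `S`. -/
def Tough (X O : Profiles) : Prop :=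
  ∀ ⦃i j c t w c' t' w'⦄, X i j c t w → O i j c' t' w' →
    w + w' + (!i).toInt + (!j).toInt ≤
      (c || c').toInt + 2 * i.toInt + 2 * j.toInt + (!(t || t' || i || j)).toInt

theorem Tough.rev (h : Tough X O) : Tough X.rev O.rev := by
  intro i j c t w c' t' w' hX hO
  have := h hX hO
  rw [Bool.or_right_comm] at this
  linarith

theorem tough_rev : Tough X.rev O.rev ↔ Tough X O := ⟨Tough.rev, Tough.rev⟩

/-- `X`, `Y` and `O` join three vertices pairwise. Both sides count the components that meet one of
these vertices, with all terms moved so that nothing is subtracted: on the left the vertex shared by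
`X` and `Y` is counted last, on the right the one shared by `O` and `Y`. -/
theorem terminal_count {i j k cx cy co : Bool} (hx : cx = true → i = false ∧ k = false)
    (hy : cy = true → k = false ∧ j = false) (ho : co = true → i = false ∧ j = false) :
    (!(k || cx || cy)).toInt + (!i).toInt + (!j).toInt + (cx || (co && cy)).toInt =
      (!(j || co || cy)).toInt + (!i).toInt + (!k).toInt + ((cx && cy) || co).toInt := by
  decide +revert

theorem tough_ser_left : Tough (X.ser Y) O ↔ Tough X (O.ser Y.rev) := by
  have count {i j k cx cy co tx ty u : Bool} {wx wy wo : ℤ} (hx : X i k cx tx wx)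
      (hy : Y k j cy ty wy) (ho : O i j co u wo) :
      (!(k || cx || cy)).toInt + (!i).toInt + (!j).toInt + (cx || (co && cy)).toInt =
        (!(j || co || cy)).toInt + (!i).toInt + (!k).toInt + ((cx && cy) || co).toInt :=
    terminal_count (fun h => X.sound (h ▸ hx)) (fun h => Y.sound (h ▸ hy))
      (fun h => O.sound (h ▸ ho))
  constructor
  · rintro h i k cx tx wx _ _ _ hx ⟨j, co, u, wo, cy, ty, wy, ho, hy, rfl, rfl, rfl⟩
    have hg := count hx hy ho
    have := h ⟨k, cx, tx, wx, cy, ty, wy, hx, hy, rfl, rfl, rfl⟩ ho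
    grind
  · rintro h i j _ _ _ co u wo ⟨k, cx, tx, wx, cy, ty, wy, hx, hy, rfl, rfl, rfl⟩ ho
    have hg := count hx hy ho
    have := h hx ⟨j, co, u, wo, cy, ty, wy, ho, hy, rfl, rfl, rfl⟩
    grind

theorem tough_ser_right : Tough (X.ser Y) O ↔ Tough Y (X.rev.ser O) := by
  rw [← tough_rev, rev_ser, tough_ser_left, ← tough_rev, rev_ser]
  rfl

theorem tough_par_left : Tough (X.par Y) O ↔ Tough X (O.par Y) := by
  constructor
  · rintro h i j cx tx wx _ _ _ hx ⟨co, u, wo, cy, ty, wy, ho, hy, rfl, rfl, rfl⟩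
    have := h ⟨cx, tx, wx, cy, ty, wy, hx, hy, rfl, rfl, rfl⟩ ho
    grind
  · rintro h i j _ _ _ co u wo ⟨cx, tx, wx, cy, ty, wy, hx, hy, rfl, rfl, rfl⟩ ho
    have := h hx ⟨co, u, wo, cy, ty, wy, ho, hy, rfl, rfl, rfl⟩
    grind

/-- Properties shared by all series-parallel graphs without deleted edges. -/
structure Intact (X : Profiles) : Prop where
  none : X false false true false 0
  src : X true false false false 0
  tgt : X false true false false 0
  idle {c : Bool} {w : ℤ} : X false false c false w → c = true ∧ w = 0

theorem Intact.rev (h : X.Intact) : X.rev.Intact := ⟨h.none, h.tgt, h.src, h.idle⟩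

theorem intact_single : (single true).Intact where
  none := ⟨rfl, rfl, rfl⟩
  src := ⟨rfl, rfl, rfl⟩
  tgt := ⟨rfl, rfl, rfl⟩
  idle h := ⟨h.1, h.2.2⟩

theorem Intact.ser (hX : X.Intact) (hY : Y.Intact) : (X.ser Y).Intact where
  none := ⟨_, _, _, _, _, _, _, hX.none, hY.none, rfl, rfl, rfl⟩
  src := ⟨_, _, _, _, _, _, _, hX.src, hY.none, rfl, rfl, rfl⟩
  tgt := ⟨_, _, _, _, _, _, _, hX.none, hY.tgt, rfl, rfl, rfl⟩
  idle := by
    rintro c _ ⟨k, c₁, t₁, w₁, c₂, t₂, w₂, h₁, h₂, rfl, ht, rfl⟩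
    obtain ⟨⟨rfl, rfl⟩, rfl⟩ : (t₁ = false ∧ t₂ = false) ∧ k = false := by simpa using ht.symm
    obtain ⟨rfl, rfl⟩ := hX.idle h₁
    obtain ⟨rfl, rfl⟩ := hY.idle h₂
    exact ⟨rfl, rfl⟩

theorem Intact.par (hX : X.Intact) (hY : Y.Intact) : (X.par Y).Intact where
  none := ⟨_, _, _, _, _, _, hX.none, hY.none, rfl, rfl, rfl⟩
  src := ⟨_, _, _, _, _, _, hX.src, hY.src, rfl, rfl, rfl⟩
  tgt := ⟨_, _, _, _, _, _, hX.tgt, hY.tgt, rfl, rfl, rfl⟩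
  idle := by
    rintro _ _ ⟨c₁, t₁, w₁, c₂, t₂, w₂, h₁, h₂, rfl, ht, rfl⟩
    obtain ⟨rfl, rfl⟩ : t₁ = false ∧ t₂ = false := by simpa using ht.symm
    obtain ⟨rfl, rfl⟩ := hX.idle h₁
    obtain ⟨rfl, rfl⟩ := hY.idle h₂
    exact ⟨rfl, rfl⟩

/-- Some deletion of the type given by `i`, `j` and `c` has gain at least `n`. -/
def Reaches (X : Profiles) (i j c : Bool) (n : ℤ) : Prop := ∃ t w, X i j c t w ∧ n ≤ w

theorem reaches_of_mem (h : X i j c t w) : X.Reaches i j c w := ⟨t, w, h, le_rfl⟩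

theorem Reaches.mono {m : ℤ} (h : X.Reaches i j c m) (hn : n ≤ m) : X.Reaches i j c n :=
  let ⟨t, w, hx, hw⟩ := h
  ⟨t, w, hx, hn.trans hw⟩

theorem Reaches.ser_delete {m : ℤ} (hX : X.Reaches i true false m) (hY : Y.Reaches true j c n) :
    (X.ser Y).Reaches i j false (m + n - 2) := by
  obtain ⟨t₁, w₁, h₁, _⟩ := hX
  obtain ⟨t₂, w₂, h₂, _⟩ := hY
  exact ⟨_, _, ⟨_, _, _, _, _, _, _, h₁, h₂, rfl, rfl, rfl⟩, by grind⟩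

theorem Reaches.ser_keep {c₁ c₂ : Bool} {m : ℤ} (hX : X.Reaches i false c₁ m)
    (hY : Y.Reaches false j c₂ n) :
    (X.ser Y).Reaches i j (c₁ && c₂) (m + n + (!(c₁ || c₂)).toInt) := by
  obtain ⟨t₁, w₁, h₁, _⟩ := hX
  obtain ⟨t₂, w₂, h₂, _⟩ := hY
  exact ⟨_, _, ⟨_, _, _, _, _, _, _, h₁, h₂, rfl, rfl, rfl⟩, by grind⟩

theorem Reaches.par {c₁ c₂ : Bool} {m : ℤ} (hX : X.Reaches i j c₁ m) (hY : Y.Reaches i j c₂ n) :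
    (X.par Y).Reaches i j (c₁ || c₂) (m + n) := by
  obtain ⟨t₁, w₁, h₁, _⟩ := hX
  obtain ⟨t₂, w₂, h₂, _⟩ := hY
  exact ⟨_, _, ⟨_, _, _, _, _, _, h₁, h₂, rfl, rfl, rfl⟩, by omega⟩

/-- Deletions that spare the terminals have gain at most `0`, and a negative gain if they delete
any vertex at all. -/
def Thrifty (X : Profiles) : Prop := ∀ ⦃c t w⦄, X false false c t w → w ≤ -t.toInt

/-- Separating the terminals without deleting them makes the gain negative. -/
def Separates (X : Profiles) : Prop := ∀ ⦃t w⦄, X false false false t w → w ≤ -1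

/-- Deleting both terminals gains at least as much as deleting each of them separately. -/
def Superadd (X : Profiles) : Prop := ∀ ⦃c₁ t₁ w₁ c₂ t₂ w₂⦄, X true false c₁ t₁ w₁ →
  X false true c₂ t₂ w₂ → X.Reaches true true false (w₁ + w₂)

/-- Deleting both terminals gains at most as much as deleting each of them separately. -/
def Subadd (X : Profiles) : Prop := ∀ ⦃c t w⦄, X true true c t w →
  ∃ c₁ t₁ w₁ c₂ t₂ w₂, X true false c₁ t₁ w₁ ∧ X false true c₂ t₂ w₂ ∧ w ≤ w₁ + w₂

theorem Thrifty.rev (h : X.Thrifty) : X.rev.Thrifty := h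

theorem Separates.rev (h : X.Separates) : X.rev.Separates := h

theorem Superadd.rev (h : X.Superadd) : X.rev.Superadd := by
  intro _ _ w₁ _ _ w₂ h₁ h₂
  rw [add_comm w₁]
  exact h h₂ h₁

theorem Subadd.rev (h : X.Subadd) : X.rev.Subadd := by
  intro c t w hx
  obtain ⟨c₁, t₁, w₁, c₂, t₂, w₂, h₁, h₂, hw⟩ := h hx
  exact ⟨c₂, t₂, w₂, c₁, t₁, w₁, h₂, h₁, add_comm w₁ w₂ ▸ hw⟩

theorem Thrifty.gain_le_zero (h : X.Thrifty) (hx : X false false c t w) : w ≤ 0 := by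
  have := h hx
  cases t <;> grind

theorem Thrifty.separates (h : X.Thrifty)
    (hX : ∀ ⦃c w⦄, X false false c false w → c = true) : X.Separates := by
  rintro (_ | _) w hw
  · cases hX hw
  · exact h hw

theorem Intact.separates (hX : X.Intact) (h : X.Thrifty) : X.Separates :=
  h.separates fun _ _ hx => (hX.idle hx).1

theorem Thrifty.of_ser_left (h : (X.ser Y).Thrifty) (hY : Y.Intact) : X.Thrifty := by
  intro c t w hx
  have := h ⟨_, _, _, _, _, _, _, hx, hY.none, rfl, rfl, rfl⟩
  grind

theorem Thrifty.of_ser_right (h : (X.ser Y).Thrifty) (hX : X.Intact) : Y.Thrifty :=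
  of_ser_left (X := Y.rev) (Y := X.rev) (rev_ser X Y ▸ h.rev) hX.rev

theorem Thrifty.of_par_left (h : (X.par Y).Thrifty) (hY : Y.Intact) : X.Thrifty := by
  intro c t w hx
  have := h ⟨_, _, _, _, _, _, hx, hY.none, rfl, rfl, rfl⟩
  grind

theorem Thrifty.of_par_right (h : (X.par Y).Thrifty) (hX : X.Intact) : Y.Thrifty :=
  of_par_left (par_comm X Y ▸ h) hX

theorem Separates.gain_le (h : X.Separates) (hX : X.Thrifty) (hx : X false false c t w) :
    w + (!c).toInt ≤ 0 := by
  cases c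
  · have := h hx
    simp only [Bool.not_false, Bool.toInt_true]
    omega
  · simpa using hX.gain_le_zero hx

theorem Superadd.par (hX : X.Superadd) (hY : Y.Superadd) : (X.par Y).Superadd := by
  rintro _ _ _ _ _ _ ⟨_, _, _, _, _, _, h₁, h₂, rfl, rfl, rfl⟩
    ⟨_, _, _, _, _, _, h₃, h₄, rfl, rfl, rfl⟩
  exact ((hX h₁ h₃).par (hY h₂ h₄)).mono (by omega)

theorem Superadd.ser (hX : X.Superadd) (hY : Y.Superadd) (dX : X.Thrifty) (dY : Y.Thrifty)
    (eX : X.Separates ∨ X.Subadd) (eY : Y.Separates)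
    (hXY : ∀ ⦃c t w c' t' w'⦄, X false true c t w → Y true false c' t' w' → w + w' ≤ 1) :
    (X.ser Y).Superadd := by
  rintro _ _ _ _ _ _ ⟨k, c₁, t₁, w₁, c₂, t₂, w₂, h₁, h₂, rfl, rfl, rfl⟩
    ⟨k', c₃, t₃, w₃, c₄, t₄, w₄, h₃, h₄, rfl, rfl, rfl⟩
  obtain rfl := conn_eq_false_of_src h₁
  obtain rfl := conn_eq_false_of_tgt h₄
  cases k <;> cases k'
  · have := eY.gain_le dY h₂
    have := dX.gain_le_zero h₃
    refine ((reaches_of_mem h₁).ser_keep (reaches_of_mem h₄)).mono ?_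
    cases c₃ <;> grind
  · have := eY.gain_le dY h₂
    refine ((hX h₁ h₃).ser_delete (reaches_of_mem h₄)).mono ?_
    grind
  · obtain rfl := conn_eq_false_of_src h₂
    have delete (h : w₃ + (!c₃).toInt ≤ 0) :=
      ((reaches_of_mem h₁).ser_delete (hY h₂ h₄)).mono (n := w₁ + w₂ - 2 + (w₃ + w₄ + (!c₃).toInt))
        (by omega)
    rcases eX with eX | sX
    · simpa using delete (eX.gain_le dX h₃)
    · obtain ⟨_, _, w₅, _, _, w₆, h₅, h₆, _⟩ := sX h₁
      have := hXY h₆ h₂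
      have := dX.gain_le_zero h₃
      obtain rfl := conn_eq_false_of_src h₅
      refine ((reaches_of_mem h₅).ser_keep (reaches_of_mem h₄)).mono ?_
      cases c₃ <;> grind
  · obtain rfl := conn_eq_false_of_tgt h₃
    obtain rfl := conn_eq_false_of_src h₂
    have := hXY h₃ h₂
    refine ((reaches_of_mem h₁).ser_delete (reaches_of_mem h₄)).mono ?_
    grind

theorem Subadd.ser (hX : X.Subadd) (h₀ : X false false false false 0)
    (hY : Y false false true false 0) : (X.ser Y).Subadd := by
  rintro _ _ _ ⟨k, c₁, t₁, w₁, c₂, t₂, w₂, h₁, h₂, rfl, rfl, rfl⟩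
  obtain rfl := conn_eq_false_of_src h₁
  obtain rfl := conn_eq_false_of_tgt h₂
  cases k
  · exact ⟨_, _, _, _, _, _, ⟨_, _, _, _, _, _, _, h₁, hY, rfl, rfl, rfl⟩,
      ⟨_, _, _, _, _, _, _, h₀, h₂, rfl, rfl, rfl⟩, by grind⟩
  · obtain ⟨_, _, _, _, _, _, h₃, h₄, _⟩ := hX h₁
    exact ⟨_, _, _, _, _, _, ⟨_, _, _, _, _, _, _, h₃, hY, rfl, rfl, rfl⟩,
      ⟨_, _, _, _, _, _, _, h₄, h₂, rfl, rfl, rfl⟩, by grind⟩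

theorem Tough.symm (h : Tough X O) : Tough O X := by
  intro i j c t w c' t' w' hO hX
  have := h hX hO
  rwa [Bool.or_comm c, Bool.or_comm t, add_comm w]

theorem Tough.thrifty (h : Tough X O) (hO : O false false c false 0) : X.Thrifty := by
  intro c' t w hx
  have := h hx hO
  cases t <;> grind

/-- What is needed of the rest of a graph around a series-parallel piece: it is either connected or
splits into two sides. -/
structure GoodEnv (O : Profiles) : Prop where
  superadd : O.Superadd
  conn_or_split :
    (O false false true false 0 ∧ ∀ ⦃c w⦄, O false false c false w → c = true) ∨
      (O false false false false 0 ∧ O.Subadd)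

namespace GoodEnv

theorem rev (h : O.GoodEnv) : O.rev.GoodEnv :=
  ⟨h.superadd.rev, h.conn_or_split.imp_right fun h' => ⟨h'.1, h'.2.rev⟩⟩

theorem exists_none (h : O.GoodEnv) : ∃ c, O false false c false 0 :=
  h.conn_or_split.elim (fun h => ⟨_, h.1⟩) (fun h => ⟨_, h.1⟩)

theorem thrifty_left (hO : O.GoodEnv) (h : Tough X O) : X.Thrifty :=
  let ⟨_, ho⟩ := hO.exists_none
  h.thrifty ho

theorem separates_or_subadd (hO : O.GoodEnv) (h : O.Thrifty) : O.Separates ∨ O.Subadd :=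
  hO.conn_or_split.imp (fun hc => h.separates hc.2) And.right

theorem par (hO : O.GoodEnv) (hY : Y.Intact) (sY : Y.Superadd) : (O.par Y).GoodEnv where
  superadd := hO.superadd.par sY
  conn_or_split := by
    obtain ⟨c, hc⟩ := hO.exists_none
    refine Or.inl ⟨⟨_, _, _, _, _, _, hc, hY.none, (Bool.or_true c).symm, rfl, rfl⟩, ?_⟩
    rintro _ _ ⟨c₁, t₁, _, c₂, t₂, _, -, hy, rfl, ht, -⟩
    obtain ⟨rfl, rfl⟩ : t₁ = false ∧ t₂ = false := by simpa using ht.symm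
    rw [(hY.idle hy).1, Bool.or_true]

theorem ser_left (hO : O.GoodEnv) (hX : X.Intact) (hY : Y.Intact) (sY : Y.Superadd)
    (h : Tough (X.ser Y) O) : (O.ser Y.rev).GoodEnv := by
  have dO : O.Thrifty := h.symm.thrifty (hX.ser hY).none
  have dY : Y.Thrifty := by
    obtain ⟨c, hc⟩ := hO.exists_none
    exact (tough_ser_right.1 h).thrifty ⟨_, _, _, _, _, _, _, hX.rev.none, hc, rfl, rfl, rfl⟩
  refine ⟨hO.superadd.ser sY.rev dO dY.rev (hO.separates_or_subadd dO)
    (hY.separates dY).rev ?_, hO.conn_or_split.imp ?_ ?_⟩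
  · intro _ t w _ t' w' ho hy
    have := h ⟨_, _, _, _, _, _, _, hX.none, hy, rfl, rfl, rfl⟩ ho
    grind [conn_eq_false_of_tgt ho, conn_eq_false_of_tgt hy]
  · rintro ⟨hn, hc⟩
    refine ⟨⟨_, _, _, _, _, _, _, hn, hY.rev.none, rfl, rfl, rfl⟩, ?_⟩
    rintro _ _ ⟨k, _, t₁, _, _, t₂, _, ho, hy, rfl, ht, -⟩
    obtain ⟨⟨rfl, rfl⟩, rfl⟩ : (t₁ = false ∧ t₂ = false) ∧ k = false := by simpa using ht.symm
    rw [hc ho, (hY.idle hy).1, Bool.and_true]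
  · rintro ⟨hn, hs⟩
    exact ⟨⟨_, _, _, _, _, _, _, hn, hY.rev.none, rfl, rfl, rfl⟩, hs.ser hn hY.rev.none⟩

theorem ser_right (hO : O.GoodEnv) (hX : X.Intact) (hY : Y.Intact) (sX : X.Superadd)
    (h : Tough (X.ser Y) O) : (X.rev.ser O).GoodEnv := by
  have := (hO.rev.ser_left hY.rev hX.rev sX.rev (rev_ser X Y ▸ h.rev)).rev
  rwa [rev_ser] at this

end GoodEnv

theorem goodEnv_isolated : isolated.GoodEnv where
  superadd := by
    rintro _ _ _ _ _ _ ⟨rfl, rfl, rfl⟩ ⟨rfl, rfl, rfl⟩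
    exact ⟨_, _, ⟨rfl, rfl, rfl⟩, le_rfl⟩
  conn_or_split := by
    refine Or.inr ⟨⟨rfl, rfl, rfl⟩, ?_⟩
    rintro _ _ _ ⟨rfl, rfl, rfl⟩
    exact ⟨_, _, _, _, _, _, ⟨rfl, rfl, rfl⟩, ⟨rfl, rfl, rfl⟩, le_rfl⟩

variable {X' : Profiles} {β βs βt βd γ γs γt γd δ δs δt δd : ℤ}

/-- Upper bounds on the gain of the deletions that contain both terminals, only the source, only
the target, and no terminal but separate them. -/
structure Bounded (X : Profiles) (both src tgt disconn : ℤ) : Prop where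
  both {c t : Bool} {w : ℤ} : X true true c t w → w ≤ both
  src {c t : Bool} {w : ℤ} : X true false c t w → w ≤ src
  tgt {c t : Bool} {w : ℤ} : X false true c t w → w ≤ tgt
  disconn {t : Bool} {w : ℤ} : X false false false t w → w ≤ disconn
  thrifty : X.Thrifty

theorem Bounded.rev (h : X.Bounded β βs βt βd) : X.rev.Bounded β βt βs βd :=
  ⟨h.both, h.tgt, h.src, h.disconn, h.thrifty⟩

theorem Bounded.mono (h : X.Bounded β βs βt βd) (hβ : β ≤ γ := by decide)
    (hs : βs ≤ γs := by decide) (ht : βt ≤ γt := by decide) (hd : βd ≤ γd := by decide) :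
    X.Bounded γ γs γt γd :=
  ⟨fun hx => (h.both hx).trans hβ, fun hx => (h.src hx).trans hs, fun hx => (h.tgt hx).trans ht,
    fun hx => (h.disconn hx).trans hd, h.thrifty⟩

theorem bounded_single_true : (single true).Bounded 1 0 0 (-2) := by
  refine ⟨?_, ?_, ?_, ?_, ?_⟩
  · rintro _ _ _ ⟨-, -, rfl⟩; decide
  · rintro _ _ _ ⟨-, -, rfl⟩; exact le_rfl
  · rintro _ _ _ ⟨-, -, rfl⟩; exact le_rfl
  · rintro _ _ ⟨h, -⟩; cases h
  · rintro _ _ _ ⟨-, rfl, rfl⟩; exact le_rfl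

theorem bounded_single_false : (single false).Bounded 1 0 0 0 := by
  refine ⟨?_, ?_, ?_, ?_, ?_⟩
  · rintro _ _ _ ⟨-, -, rfl⟩; decide
  · rintro _ _ _ ⟨-, -, rfl⟩; exact le_rfl
  · rintro _ _ _ ⟨-, -, rfl⟩; exact le_rfl
  · rintro _ _ ⟨-, -, rfl⟩; exact le_rfl
  · rintro _ _ _ ⟨-, rfl, rfl⟩; exact le_rfl

theorem Bounded.ser_src (hX : X.Bounded β βs βt βd) (hY : Y.Bounded γ γs γt γd)
    (h₁ : β + γs - 2 ≤ δs) (h₂ : βs ≤ δs) (h₃ : βs + γd + 1 ≤ δs)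
    (h : X.ser Y true false c t w) : w ≤ δs := by
  obtain ⟨k, c₁, t₁, w₁, c₂, t₂, w₂, hx, hy, rfl, rfl, rfl⟩ := h
  obtain rfl := conn_eq_false_of_src hx
  cases k
  · have := hX.src hx
    cases c₂
    · grind [hY.disconn hy]
    · grind [hY.thrifty.gain_le_zero hy]
  · grind [hX.both hx, hY.src hy]

theorem Bounded.ser_tgt (hX : X.Bounded β βs βt βd) (hY : Y.Bounded γ γs γt γd)
    (h₁ : βt + γ - 2 ≤ δt) (h₂ : γt ≤ δt) (h₃ : βd + γt + 1 ≤ δt)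
    (h : X.ser Y false true c t w) : w ≤ δt := by
  have h : (X.ser Y).rev true false c t w := h
  rw [rev_ser] at h
  exact hY.rev.ser_src hX.rev (by omega) h₂ (by omega) h

theorem Bounded.thrifty_ser (hX : X.Bounded β βs βt βd) (hY : Y.Bounded γ γs γt γd)
    (h₁ : βt + γs ≤ 1) (h₂ : βd + γd ≤ -2) : (X.ser Y).Thrifty := by
  rintro _ _ _ ⟨k, c₁, t₁, w₁, c₂, t₂, w₂, hx, hy, rfl, rfl, rfl⟩
  cases k
  · have := hX.thrifty hx
    have := hY.thrifty hy
    cases c₁ <;> cases c₂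
    · have := hX.disconn hx
      have := hY.disconn hy
      cases t₁ <;> cases t₂ <;> grind
    all_goals cases t₁ <;> cases t₂ <;> grind
  · grind [hX.tgt hx, hY.src hy]

theorem Bounded.ser (hX : X.Bounded β βs βt βd) (hY : Y.Bounded γ γs γt γd)
    (hboth : β + γ - 2 ≤ δ ∧ βs + γt + 1 ≤ δ := by decide)
    (hsrc : β + γs - 2 ≤ δs ∧ βs ≤ δs ∧ βs + γd + 1 ≤ δs := by decide)
    (htgt : βt + γ - 2 ≤ δt ∧ γt ≤ δt ∧ βd + γt + 1 ≤ δt := by decide)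
    (hdisconn : βt + γs - 2 ≤ δd ∧ γd ≤ δd ∧ βd ≤ δd ∧ βd + γd + 1 ≤ δd := by decide)
    (hthrifty : βt + γs ≤ 1 ∧ βd + γd ≤ -2 := by decide) :
    (X.ser Y).Bounded δ δs δt δd where
  both := by
    rintro _ _ _ ⟨k, c₁, t₁, w₁, c₂, t₂, w₂, hx, hy, rfl, rfl, rfl⟩
    obtain rfl := conn_eq_false_of_src hx
    obtain rfl := conn_eq_false_of_tgt hy
    cases k
    · grind [hX.src hx, hY.tgt hy]
    · grind [hX.both hx, hY.both hy]
  src := hX.ser_src hY hsrc.1 hsrc.2.1 hsrc.2.2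
  tgt := hX.ser_tgt hY htgt.1 htgt.2.1 htgt.2.2
  disconn := by
    rintro _ _ ⟨k, c₁, t₁, w₁, c₂, t₂, w₂, hx, hy, hc, rfl, rfl⟩
    cases k
    · have := hX.thrifty.gain_le_zero hx
      have := hY.thrifty.gain_le_zero hy
      cases c₁ <;> cases c₂
      · grind [hX.disconn hx, hY.disconn hy]
      · grind [hX.disconn hx]
      · grind [hY.disconn hy]
      · cases hc
    · grind [hX.tgt hx, hY.src hy]
  thrifty := hX.thrifty_ser hY hthrifty.1 hthrifty.2

theorem Thrifty.par (hX : X.Thrifty) (hY : Y.Thrifty) : (X.par Y).Thrifty := by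
  rintro _ _ _ ⟨c₁, t₁, w₁, c₂, t₂, w₂, hx, hy, rfl, rfl, rfl⟩
  have := hX hx
  have := hY hy
  cases t₁ <;> cases t₂ <;> grind

theorem Bounded.par (hX : X.Bounded β βs βt βd) (hY : Y.Bounded γ γs γt γd) :
    (X.par Y).Bounded (β + γ) (βs + γs) (βt + γt) (βd + γd) where
  both := by
    rintro _ _ _ ⟨_, _, _, _, _, _, hx, hy, -, -, rfl⟩
    exact add_le_add (hX.both hx) (hY.both hy)
  src := by
    rintro _ _ _ ⟨_, _, _, _, _, _, hx, hy, -, -, rfl⟩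
    exact add_le_add (hX.src hx) (hY.src hy)
  tgt := by
    rintro _ _ _ ⟨_, _, _, _, _, _, hx, hy, -, -, rfl⟩
    exact add_le_add (hX.tgt hx) (hY.tgt hy)
  disconn := by
    rintro _ _ ⟨c₁, _, _, c₂, _, _, hx, hy, hc, -, rfl⟩
    obtain ⟨rfl, rfl⟩ : c₁ = false ∧ c₂ = false := by simpa using hc.symm
    exact add_le_add (hX.disconn hx) (hY.disconn hy)
  thrifty := hX.thrifty.par hY.thrifty

theorem Bounded.tough_isolated (h : X.Bounded 2 1 1 (-2)) : Tough X isolated := by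
  rintro i j c t w _ _ _ hx ⟨rfl, rfl, rfl⟩
  cases i <;> cases j
  · cases c
    · grind [h.disconn hx]
    · have := h.thrifty hx
      cases t <;> grind
  · grind [h.tgt hx]
  · grind [h.src hx]
  · grind [h.both hx]

/-- If the bounds on a modification `X'` of `X` are close to those of `X`, toughness can only be
lost in an environment that gains by the deletion of one terminal. -/
theorem Tough.exists_gain (h : Tough X O) (hn : X.Reaches true true false n)
    (hX' : X'.Bounded n βs βt (-1)) (dO : O.Thrifty) (sO : O.Separates) (hv : ¬ Tough X' O) :
    (∃ c t w, O true false c t w ∧ 2 ≤ w + βs) ∨ ∃ c t w, O false true c t w ∧ 2 ≤ w + βt := by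
  simp only [Tough, not_forall, not_le] at hv
  obtain ⟨i, j, c, t, w, c', t', w', hx, ho, hv⟩ := hv
  cases i <;> cases j
  · have := hX'.thrifty hx
    have := dO ho
    exfalso
    cases c
    · have := hX'.disconn hx
      cases c'
      · grind [sO ho]
      · cases t' <;> grind
    · cases t <;> cases t' <;> grind
  · obtain rfl := conn_eq_false_of_tgt hx
    obtain rfl := conn_eq_false_of_tgt ho
    exact Or.inr ⟨_, _, _, ho, by grind [hX'.tgt hx]⟩
  · obtain rfl := conn_eq_false_of_src hx
    obtain rfl := conn_eq_false_of_src ho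
    exact Or.inl ⟨_, _, _, ho, by grind [hX'.src hx]⟩
  · obtain ⟨t, w, hx₀, _⟩ := hn
    obtain rfl := conn_eq_false_of_src ho
    have := h hx₀ ho
    grind [hX'.both hx]

theorem Tough.src_le (h : Tough X O) (hX : X.Intact) (ho : O true false c t w) : w ≤ 1 := by
  have := h hX.src ho
  obtain rfl := conn_eq_false_of_src ho
  grind

theorem Tough.tgt_le (h : Tough X O) (hX : X.Intact) (ho : O false true c t w) : w ≤ 1 :=
  h.rev.src_le hX.rev ho

theorem Tough.of_bounded (h : Tough X O) (hX : X.Intact) (hn : X.Reaches true true false 1)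
    (hX' : X'.Bounded 1 0 0 (-1)) (dO : O.Thrifty) (sO : O.Separates) : Tough X' O := by
  by_contra hv
  obtain ⟨_, _, _, ho, _⟩ | ⟨_, _, _, ho, _⟩ := h.exists_gain hn hX' dO sO hv
  · have := h.src_le hX ho
    omega
  · have := h.tgt_le hX ho
    omega

theorem Tough.single_false (h : Tough (single true) O)
    (sO : ∀ ⦃t w⦄, O false false false t w → w ≤ -2) : Tough (single false) O := by
  rintro i j _ _ _ c t w ⟨rfl, rfl, rfl⟩ ho
  have ht := h ⟨rfl, rfl, rfl⟩ ho
  cases i <;> cases j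
  · have := (h.symm.thrifty intact_single.none) ho
    cases c
    · grind [sO ho]
    · cases t <;> grind
  all_goals grind

theorem Tough.of_bounded_par {X₁ X₂ : Profiles} (h : Tough (X.par Y) O) (hX : X.Intact)
    (hY : Y.Intact) (hO : O.GoodEnv) (hn : X.Reaches true true false 2)
    (hn' : Y.Reaches true true false 1) (hX₁ : X₁.Bounded 2 0 1 (-1))
    (hX₂ : X₂.Bounded 2 1 0 (-1)) (bY : Y.Bounded β 0 0 (-1)) :
    Tough X₁ (O.par Y) ∨ Tough X₂ (O.par Y) := by
  by_contra! hv
  have hT := tough_par_left.1 h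
  have dOY : (O.par Y).Thrifty := hT.symm.thrifty hX.none
  have sOY : (O.par Y).Separates := by
    rintro _ _ ⟨c₁, _, _, c₂, _, _, ho, hy, hc, -, rfl⟩
    obtain ⟨rfl, rfl⟩ : c₁ = false ∧ c₂ = false := by simpa using hc.symm
    have := (h.symm.thrifty (hX.par hY).none).gain_le_zero ho
    have := bY.disconn hy
    omega
  obtain ⟨_, _, w₁, ho₁, _⟩ : ∃ c t w, O false true c t w ∧ 1 ≤ w := by
    obtain ⟨_, _, _, ho, _⟩ | ⟨_, _, _, ⟨_, _, _, _, _, _, ho, hy, -, -, rfl⟩, _⟩ :=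
      hT.exists_gain hn hX₁ dOY sOY hv.1
    · have := hT.src_le hX ho
      omega
    · exact ⟨_, _, _, ho, by grind [bY.tgt hy]⟩
  obtain ⟨_, _, w₂, ho₂, _⟩ : ∃ c t w, O true false c t w ∧ 1 ≤ w := by
    obtain ⟨_, _, _, ⟨_, _, _, _, _, _, ho, hy, -, -, rfl⟩, _⟩ | ⟨_, _, _, ho, _⟩ :=
      hT.exists_gain hn hX₂ dOY sOY hv.2
    · exact ⟨_, _, _, ho, by grind [bY.src hy]⟩
    · have := hT.tgt_le hX ho
      omega
  obtain ⟨_, _, ho₃, _⟩ := hO.superadd ho₂ ho₁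
  obtain ⟨_, _, hxy, _⟩ := hn.par hn'
  have := h hxy ho₃
  grind

end Profiles

namespace SPTree

variable {V : Type*} {T l r : SPTree V} {x : V}

open Classical in
/-- The deletion profiles of the graph of `T` without the edges in `F`. -/
noncomputable def profiles (F : Set (Sym2 V)) : SPTree V → Profiles
  | edge u v => Profiles.single (decide (s(u, v) ∉ F))
  | series l r => (l.profiles F).ser (r.profiles F)
  | parallel l r => (l.profiles F).par (r.profiles F)

theorem profiles_congr {F F' : Set (Sym2 V)}
    (h : ∀ e ∈ T.edges, e ∈ F ↔ e ∈ F') : T.profiles F = T.profiles F' := by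
  induction T with
  | edge u v =>
    rw [profiles, profiles, decide_eq_decide.2 (not_congr (h s(u, v) rfl))]
  | series l r hl hr | parallel l r hl hr =>
    rw [profiles, profiles, hl fun e he => h e (Or.inl he), hr fun e he => h e (Or.inr he)]

theorem profiles_singleton {e : Sym2 V} (h : e ∉ T.edges) :
    T.profiles {e} = T.profiles ∅ :=
  profiles_congr fun e' he' => by
    simp only [Set.mem_singleton_iff, Set.mem_empty_iff_false, iff_false]
    rintro rfl
    exact h he'

theorem profiles_edge_empty (u v : V) : (edge u v).profiles ∅ = Profiles.single true := by
  simp [profiles]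

theorem profiles_edge_singleton (u v : V) :
    (edge u v).profiles {s(u, v)} = Profiles.single false := by
  simp [profiles]

theorem intact_profiles (T : SPTree V) : (T.profiles ∅).Intact := by
  induction T with
  | edge u v => simpa only [profiles_edge_empty] using Profiles.intact_single
  | series l r hl hr => exact hl.ser hr
  | parallel l r hl hr => exact hl.par hr

theorem superadd_profiles (h : (T.profiles ∅).Thrifty) :
    (T.profiles ∅).Superadd := by
  induction T with
  | edge u v =>
    rw [profiles_edge_empty]
    rintro _ _ _ _ _ _ ⟨-, -, rfl⟩ ⟨-, -, rfl⟩
    exact ⟨_, _, ⟨rfl, rfl, rfl⟩, le_rfl⟩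
  | series l r hl hr =>
    have il := l.intact_profiles
    have ir := r.intact_profiles
    have tl : (l.profiles ∅).Thrifty := h.of_ser_left ir
    have tr : (r.profiles ∅).Thrifty := h.of_ser_right il
    refine (hl tl).ser (hr tr) tl tr (Or.inl (il.separates tl)) (ir.separates tr) ?_
    intro c t w c' t' w' hx hy
    have := h ⟨_, _, _, _, _, _, _, hx, hy, rfl, rfl, rfl⟩
    grind
  | parallel l r hl hr =>
    exact (hl (h.of_par_left r.intact_profiles)).par (hr (h.of_par_right l.intact_profiles))

theorem src_mem_verts (T : SPTree V) : T.src ∈ T.verts := by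
  induction T with
  | edge u v => exact Or.inl rfl
  | series _ _ hl _ | parallel _ _ hl _ => exact Or.inl hl

theorem tgt_mem_verts (T : SPTree V) : T.tgt ∈ T.verts := by
  induction T with
  | edge u v => exact Or.inr rfl
  | series _ _ _ hr => exact Or.inr hr
  | parallel _ _ hl _ => exact Or.inl hl

theorem mem_verts_of_mem_edges {e : Sym2 V} (he : e ∈ T.edges) (hx : x ∈ e) :
    x ∈ T.verts := by
  induction T with
  | edge u v =>
    obtain rfl : e = s(u, v) := he
    simpa [verts] using hx
  | series l r hl hr | parallel l r hl hr => exact he.imp (fun h => hl h) (fun h => hr h)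

theorem WF.src_ne_tgt (h : T.WF) : T.src ≠ T.tgt := by
  induction T with
  | edge u v => exact h
  | series l r hl _ =>
    intro he
    have : l.src ∈ l.verts ∩ r.verts := ⟨l.src_mem_verts, he ▸ r.tgt_mem_verts⟩
    rw [h.2.2.2] at this
    exact hl h.1 this
  | parallel _ _ hl _ => exact hl h.1

theorem WF.not_isDiag (h : T.WF) {e : Sym2 V} (he : e ∈ T.edges) :
    ¬ e.IsDiag := by
  induction T with
  | edge u v =>
    obtain rfl : e = s(u, v) := he
    rw [Sym2.mk_isDiag_iff]
    exact h
  | series l r hl hr | parallel l r hl hr => exact he.elim (hl h.1) (hr h.2.1)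

theorem WF.eq_of_mem (h : (series l r).WF) (hl : x ∈ l.verts) (hr : x ∈ r.verts) :
    x = l.tgt := by
  have : x ∈ l.verts ∩ r.verts := ⟨hl, hr⟩
  rwa [h.2.2.2] at this

theorem WF.eq_or_eq_of_mem (h : (parallel l r).WF) (hl : x ∈ l.verts) (hr : x ∈ r.verts) :
    x = l.src ∨ x = l.tgt := by
  have : x ∈ l.verts ∩ r.verts := ⟨hl, hr⟩
  rwa [h.2.2.2.2.1] at this

theorem WF.disjoint_edges (h : (series l r).WF) : Disjoint l.edges r.edges := by
  rw [Set.disjoint_left]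
  intro e hl hr
  have eq_tgt (x : V) (hx : x ∈ e) : x = l.tgt :=
    h.eq_of_mem (mem_verts_of_mem_edges hl hx) (mem_verts_of_mem_edges hr hx)
  refine h.1.not_isDiag hl ?_
  induction e with
  | h x y =>
    rw [Sym2.mk_isDiag_iff, eq_tgt x (Sym2.mem_mk_left x y), eq_tgt y (Sym2.mem_mk_right x y)]

theorem WF.profiles_series_left (h : (series l r).WF) {e : Sym2 V}
    (he : e ∈ l.edges) :
    (series l r).profiles {e} = (l.profiles {e}).ser (r.profiles ∅) := by
  rw [profiles, profiles_singleton (Set.disjoint_left.1 h.disjoint_edges he)]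

theorem WF.profiles_series_right (h : (series l r).WF) {e : Sym2 V}
    (he : e ∈ r.edges) :
    (series l r).profiles {e} = (l.profiles ∅).ser (r.profiles {e}) := by
  rw [profiles, profiles_singleton (Set.disjoint_right.1 h.disjoint_edges he)]

theorem WF.profiles_parallel_left (h : (parallel l r).WF) {e : Sym2 V}
    (he : e ∈ l.edges) :
    (parallel l r).profiles {e} = (l.profiles {e}).par (r.profiles ∅) := by
  rw [profiles, profiles_singleton (Set.disjoint_left.1 h.2.2.2.2.2 he)]

theorem WF.profiles_parallel_right (h : (parallel l r).WF) {e : Sym2 V}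
    (he : e ∈ r.edges) :
    (parallel l r).profiles {e} = (l.profiles ∅).par (r.profiles {e}) := by
  rw [profiles, profiles_singleton (Set.disjoint_right.1 h.2.2.2.2.2 he)]

end SPTree

/-! ### Chains of edges and pearls -/

/-- A series connection, bracketed arbitrarily, of single edges and pearls. -/
inductive IsPearlChain {V : Type*} : SPTree V → Prop
  | edge (u v : V) : IsPearlChain (.edge u v)
  | pearl {p : SPTree V} : IsPearl p → IsPearlChain p
  | series {l r : SPTree V} : IsPearlChain l → IsPearlChain r → IsPearlChain (.series l r)

section Chains

open Profiles

variable {V : Type*} {T l r : SPTree V} {n : ℕ} {β βs βt βd γ γs γt γd δ δs δt δd : ℤ}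

/-- The graph of `T` has an edge after whose deletion the gains obey the given bounds. -/
def SPTree.EdgeBounded (T : SPTree V) (both src tgt disconn : ℤ) : Prop :=
  ∃ e ∈ T.edges, (T.profiles {e}).Bounded both src tgt disconn

namespace SPTree.EdgeBounded

theorem mono (h : T.EdgeBounded β βs βt βd) (hβ : β ≤ γ := by decide) (hs : βs ≤ γs := by decide)
    (ht : βt ≤ γt := by decide) (hd : βd ≤ γd := by decide) : T.EdgeBounded γ γs γt γd :=
  let ⟨e, he, hb⟩ := h
  ⟨e, he, hb.mono hβ hs ht hd⟩

theorem series_left (hl : l.EdgeBounded β βs βt βd) (hT : (series l r).WF)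
    (hr : (r.profiles ∅).Bounded γ γs γt γd)
    (hboth : β + γ - 2 ≤ δ ∧ βs + γt + 1 ≤ δ := by decide)
    (hsrc : β + γs - 2 ≤ δs ∧ βs ≤ δs ∧ βs + γd + 1 ≤ δs := by decide)
    (htgt : βt + γ - 2 ≤ δt ∧ γt ≤ δt ∧ βd + γt + 1 ≤ δt := by decide)
    (hdisconn : βt + γs - 2 ≤ δd ∧ γd ≤ δd ∧ βd ≤ δd ∧ βd + γd + 1 ≤ δd := by decide)
    (hthrifty : βt + γs ≤ 1 ∧ βd + γd ≤ -2 := by decide) :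
    (series l r).EdgeBounded δ δs δt δd := by
  obtain ⟨e, he, h⟩ := hl
  refine ⟨e, Or.inl he, ?_⟩
  rw [hT.profiles_series_left he]
  exact h.ser hr hboth hsrc htgt hdisconn hthrifty

theorem series_right (hr : r.EdgeBounded γ γs γt γd) (hT : (series l r).WF)
    (hl : (l.profiles ∅).Bounded β βs βt βd)
    (hboth : β + γ - 2 ≤ δ ∧ βs + γt + 1 ≤ δ := by decide)
    (hsrc : β + γs - 2 ≤ δs ∧ βs ≤ δs ∧ βs + γd + 1 ≤ δs := by decide)
    (htgt : βt + γ - 2 ≤ δt ∧ γt ≤ δt ∧ βd + γt + 1 ≤ δt := by decide)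
    (hdisconn : βt + γs - 2 ≤ δd ∧ γd ≤ δd ∧ βd ≤ δd ∧ βd + γd + 1 ≤ δd := by decide)
    (hthrifty : βt + γs ≤ 1 ∧ βd + γd ≤ -2 := by decide) :
    (series l r).EdgeBounded δ δs δt δd := by
  obtain ⟨e, he, h⟩ := hr
  refine ⟨e, Or.inr he, ?_⟩
  rw [hT.profiles_series_right he]
  exact hl.ser h hboth hsrc htgt hdisconn hthrifty

theorem parallel_left (hl : l.EdgeBounded β βs βt βd) (hT : (parallel l r).WF)
    (hr : (r.profiles ∅).Bounded γ γs γt γd) :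
    (parallel l r).EdgeBounded (β + γ) (βs + γs) (βt + γt) (βd + γd) := by
  obtain ⟨e, he, h⟩ := hl
  refine ⟨e, Or.inl he, ?_⟩
  rw [hT.profiles_parallel_left he]
  exact h.par hr

end SPTree.EdgeBounded

theorem IsPathT.pos (h : IsPathT T n) : 1 ≤ n := by
  induction h with
  | edge _ _ => exact le_rfl
  | series _ _ h₁ h₂ => omega

theorem IsPathT.bounded (h : IsPathT T n) : (T.profiles ∅).Bounded 1 0 0 (-2) := by
  induction h with
  | edge u v => simpa only [SPTree.profiles_edge_empty] using bounded_single_true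
  | series _ _ h₁ h₂ => exact h₁.ser h₂

theorem SPTree.reaches_series (l r : SPTree V) :
    ((series l r).profiles ∅).Reaches true true false 1 :=
  (reaches_of_mem l.intact_profiles.src).ser_keep (reaches_of_mem r.intact_profiles.tgt)

theorem IsPathT.reaches (h : IsPathT T n) (hn : 2 ≤ n) :
    (T.profiles ∅).Reaches true true false 1 := by
  cases h with
  | edge u v => omega
  | series _ _ => exact SPTree.reaches_series _ _

theorem SPTree.edgeBounded_edge (u v : V) : (edge u v).EdgeBounded 1 0 0 0 :=
  ⟨s(u, v), rfl, by simpa only [profiles_edge_singleton] using bounded_single_false⟩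

theorem IsPathT.edgeBounded_src (h : IsPathT T n) (hT : T.WF) : T.EdgeBounded 1 0 1 0 := by
  induction h with
  | edge u v => exact (SPTree.edgeBounded_edge u v).mono
  | series _ hr ih _ => exact (ih hT.1).series_left hT hr.bounded

theorem IsPathT.edgeBounded_tgt (h : IsPathT T n) (hT : T.WF) : T.EdgeBounded 1 1 0 0 := by
  induction h with
  | edge u v => exact (SPTree.edgeBounded_edge u v).mono
  | series hl _ _ ih => exact (ih hT.2.1).series_right hT hl.bounded

theorem IsPearl.bounded (h : IsPearl T) : (T.profiles ∅).Bounded 2 0 0 (-2) := by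
  obtain ⟨l, r, m, n, rfl, hl, hr, -, -⟩ := h
  exact (hl.bounded.par hr.bounded).mono

theorem IsPearl.reaches (h : IsPearl T) : (T.profiles ∅).Reaches true true false 2 := by
  obtain ⟨l, r, m, n, rfl, hl, hr, hm, hn⟩ := h
  exact (hl.reaches hm).par (hr.reaches hn)

theorem IsPearl.edgeBounded_src (h : IsPearl T) (hT : T.WF) : T.EdgeBounded 2 0 1 (-2) := by
  obtain ⟨l, r, m, n, rfl, hl, hr, -, -⟩ := h
  exact (hl.edgeBounded_src hT.1).parallel_left hT hr.bounded

theorem IsPearl.edgeBounded_tgt (h : IsPearl T) (hT : T.WF) : T.EdgeBounded 2 1 0 (-2) := by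
  obtain ⟨l, r, m, n, rfl, hl, hr, -, -⟩ := h
  exact (hl.edgeBounded_tgt hT.1).parallel_left hT hr.bounded

theorem IsPearlChain.bounded (h : IsPearlChain T) : (T.profiles ∅).Bounded 2 0 0 (-2) := by
  induction h with
  | edge u v => exact (IsPathT.edge u v).bounded.mono
  | pearl hp => exact hp.bounded
  | series _ _ h₁ h₂ => exact h₁.ser h₂

theorem IsPearlChain.eq_edge_or_reaches (h : IsPearlChain T) :
    (∃ u v, T = .edge u v) ∨ (T.profiles ∅).Reaches true true false 1 := by
  cases h with
  | edge u v => exact Or.inl ⟨u, v, rfl⟩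
  | pearl hp => exact Or.inr (hp.reaches.mono one_le_two)
  | series _ _ => exact Or.inr (SPTree.reaches_series _ _)

/-- The three cases are paths, chains with both edges and pearls, and chains of pearls. -/
theorem IsPearlChain.isPathT_or_edgeBounded (h : IsPearlChain T) (hT : T.WF) :
    (∃ n, IsPathT T n) ∨ T.EdgeBounded 1 0 0 (-1) ∨
      ((T.profiles ∅).Reaches true true false 2 ∧ T.EdgeBounded 2 0 1 (-1) ∧
        T.EdgeBounded 2 1 0 (-1)) := by
  induction h with
  | edge u v => exact Or.inl ⟨_, .edge u v⟩
  | pearl hp =>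
    exact Or.inr (Or.inr ⟨hp.reaches, (hp.edgeBounded_src hT).mono, (hp.edgeBounded_tgt hT).mono⟩)
  | @series l r hl hr ihl ihr =>
    rcases ihl hT.1 with ⟨m, pl⟩ | el | ⟨gl, sl, -⟩
    · rcases ihr hT.2.1 with ⟨n, pr⟩ | er | ⟨-, -, tr⟩
      · exact Or.inl ⟨_, pl.series pr⟩
      · exact Or.inr (Or.inl (er.series_right hT pl.bounded))
      · exact Or.inr (Or.inl (tr.series_right hT pl.bounded))
    · exact Or.inr (Or.inl (el.series_left hT hr.bounded))
    · rcases ihr hT.2.1 with ⟨n, pr⟩ | er | ⟨gr, -, tr⟩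
      · exact Or.inr (Or.inl (sl.series_left hT pr.bounded))
      · exact Or.inr (Or.inl (er.series_right hT hl.bounded))
      · exact Or.inr (Or.inr ⟨gl.ser_delete gr, sl.series_left hT hr.bounded,
          tr.series_right hT hl.bounded⟩)

/-! ### Pieces of minimally tough graphs -/

/-- The graph of `T`, glued to its environment `O`, is minimally tough with respect to the deletion
of edges of `T`. -/
structure SPTree.Critical (T : SPTree V) (O : Profiles) : Prop where
  wf : T.WF
  goodEnv : O.GoodEnv
  tough : Tough (T.profiles ∅) O
  not_tough : ∀ e ∈ T.edges, ¬ Tough (T.profiles {e}) O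

namespace SPTree.Critical

variable {O : Profiles}

theorem thrifty (h : T.Critical O) : (T.profiles ∅).Thrifty :=
  h.goodEnv.thrifty_left h.tough

theorem series_left (h : (series l r).Critical O) : l.Critical (O.ser (r.profiles ∅).rev) where
  wf := h.wf.1
  goodEnv := h.goodEnv.ser_left l.intact_profiles r.intact_profiles
    (superadd_profiles (h.thrifty.of_ser_right l.intact_profiles)) h.tough
  tough := tough_ser_left.1 h.tough
  not_tough e he := by
    rw [← tough_ser_left, ← h.wf.profiles_series_left he]
    exact h.not_tough e (Or.inl he)

theorem series_right (h : (series l r).Critical O) : r.Critical ((l.profiles ∅).rev.ser O) where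
  wf := h.wf.2.1
  goodEnv := h.goodEnv.ser_right l.intact_profiles r.intact_profiles
    (superadd_profiles (h.thrifty.of_ser_left r.intact_profiles)) h.tough
  tough := tough_ser_right.1 h.tough
  not_tough e he := by
    rw [← tough_ser_right, ← h.wf.profiles_series_right he]
    exact h.not_tough e (Or.inr he)

theorem parallel_left (h : (parallel l r).Critical O) : l.Critical (O.par (r.profiles ∅)) where
  wf := h.wf.1
  goodEnv := h.goodEnv.par r.intact_profiles
    (superadd_profiles (h.thrifty.of_par_right l.intact_profiles))
  tough := tough_par_left.1 h.tough
  not_tough e he := by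
    rw [← tough_par_left, ← h.wf.profiles_parallel_left he]
    exact h.not_tough e (Or.inl he)

theorem parallel_comm (h : (parallel l r).Critical O) : (parallel r l).Critical O where
  wf := by
    obtain ⟨hl, hr, hsrc, htgt, hverts, hedges⟩ := h.wf
    exact ⟨hr, hl, hsrc.symm, htgt.symm, by rw [Set.inter_comm, hverts, hsrc, htgt], hedges.symm⟩
  goodEnv := h.goodEnv
  tough := by
    rw [profiles, par_comm]
    exact h.tough
  not_tough e he := by
    rw [profiles, par_comm]
    exact h.not_tough e he.symm

theorem disconn_le (h : (parallel l r).Critical O) (hr : IsPearlChain r) {t : Bool} {w : ℤ}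
    (ho : O.par (r.profiles ∅) false false false t w) : w ≤ -2 := by
  obtain ⟨c₁, _, _, c₂, _, _, h₁, h₂, hc, -, rfl⟩ := ho
  obtain ⟨rfl, rfl⟩ : c₁ = false ∧ c₂ = false := by simpa using hc.symm
  have := (h.tough.symm.thrifty (parallel l r).intact_profiles.none).gain_le_zero h₁
  have := hr.bounded.disconn h₂
  omega

theorem left_ne_edge (h : (parallel l r).Critical O) (hr : IsPearlChain r) (u v : V) :
    l ≠ edge u v := by
  rintro rfl
  have ht := h.parallel_left.tough
  have hv := h.parallel_left.not_tough s(u, v) rfl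
  rw [profiles_edge_empty] at ht
  rw [profiles_edge_singleton] at hv
  exact hv (ht.single_false fun _ _ => h.disconn_le hr)

theorem exists_isPathT (h : (parallel l r).Critical O) (hl : IsPearlChain l)
    (hr : IsPearlChain r) : ∃ n, IsPathT l n ∧ 2 ≤ n := by
  have il := l.intact_profiles
  have ir := r.intact_profiles
  have gain : (l.profiles ∅).Reaches true true false 1 :=
    hl.eq_edge_or_reaches.resolve_left fun ⟨u, v, he⟩ => h.left_ne_edge hr u v he
  have gain' : (r.profiles ∅).Reaches true true false 1 :=
    hr.eq_edge_or_reaches.resolve_left fun ⟨u, v, he⟩ => h.parallel_comm.left_ne_edge hl u v he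
  have hl' := h.parallel_left
  rcases hl.isPathT_or_edgeBounded h.wf.1 with
    ⟨n, hn⟩ | ⟨e, he, hb⟩ | ⟨gain₂, ⟨e₁, he₁, hb₁⟩, ⟨e₂, he₂, hb₂⟩⟩
  · refine ⟨n, hn, ?_⟩
    cases hn with
    | edge u v => exact (h.left_ne_edge hr u v rfl).elim
    | series h₁ h₂ => exact add_le_add h₁.pos h₂.pos
  · have sep : (O.par (r.profiles ∅)).Separates := fun _ _ ho => by
      have := h.disconn_le hr ho
      omega
    exact (hl'.not_tough e he
      (hl'.tough.of_bounded il gain hb (hl'.tough.symm.thrifty il.none) sep)).elim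
  · exact (h.tough.of_bounded_par il ir h.goodEnv gain₂ gain' hb₁ hb₂
      (hr.bounded.mono (γ := 2))).elim
      (fun ht => (hl'.not_tough e₁ he₁ ht).elim) (fun ht => (hl'.not_tough e₂ he₂ ht).elim)

theorem isPearlChain (h : T.Critical O) : IsPearlChain T := by
  induction T generalizing O with
  | edge u v => exact .edge u v
  | series l r ihl ihr => exact .series (ihl h.series_left) (ihr h.series_right)
  | parallel l r ihl ihr =>
    have hl := ihl h.parallel_left
    have hr := ihr h.parallel_comm.parallel_left
    obtain ⟨m, pl, hm⟩ := h.exists_isPathT hl hr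
    obtain ⟨n, pr, hn⟩ := h.parallel_comm.exists_isPathT hr hl
    exact .pearl ⟨l, r, m, n, rfl, pl, pr, hm, hn⟩

end SPTree.Critical

end Chains

/-! ### Pearl necklaces -/

namespace Profiles

variable {X : Profiles}

/-- Some deletion that contains the source but not the target gains at least `1`. -/
abbrev GainsSrc (X : Profiles) : Prop := X.Reaches true false false 1

/-- Some deletion that contains the target but not the source gains at least `1`. -/
abbrev GainsTgt (X : Profiles) : Prop := X.Reaches false true false 1

/-- Some deletion separates the terminals and loses at most `1`. -/
abbrev Splits (X : Profiles) : Prop := X.Reaches false false false (-1)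

theorem Intact.reaches_none (h : X.Intact) : X.Reaches false false true 0 := reaches_of_mem h.none

theorem Intact.reaches_src (h : X.Intact) : X.Reaches true false false 0 := reaches_of_mem h.src

theorem Intact.reaches_tgt (h : X.Intact) : X.Reaches false true false 0 := reaches_of_mem h.tgt

theorem Splits.not_tough_isolated (h : X.Splits) : ¬ Tough X isolated := by
  obtain ⟨t, w, hx, _⟩ := h
  intro ht
  have := ht hx ⟨rfl, rfl, rfl⟩
  cases t
  · have := X.nonneg hx
    grind
  · grind

end Profiles

/-- A single edge or a pearl. -/
def IsBead {V : Type*} (T : SPTree V) : Prop := (∃ u v, T = .edge u v) ∨ IsPearl T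

/-- A series connection of single edges and pearls that is bracketed to the right. -/
inductive IsBeadSeq {V : Type*} : SPTree V → Prop
  | single {b : SPTree V} : IsBead b → IsBeadSeq b
  | cons {b r : SPTree V} : IsBead b → IsBeadSeq r → IsBeadSeq (.series b r)

/-- The two trees describe the same graph with the same terminals. -/
structure SPTree.SameGraph {V : Type*} (T T' : SPTree V) : Prop where
  src_eq : T.src = T'.src
  tgt_eq : T.tgt = T'.tgt
  verts_eq : T.verts = T'.verts
  edges_eq : T.edges = T'.edges

section Necklaces

open Profiles

variable {V : Type*} {T l r : SPTree V} {n : ℕ}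

theorem SPTree.SameGraph.refl (T : SPTree V) : T.SameGraph T := ⟨rfl, rfl, rfl, rfl⟩

theorem IsBeadSeq.append (hl : IsBeadSeq l) (hr : IsBeadSeq r) (h : (SPTree.series l r).WF) :
    ∃ T : SPTree V, IsBeadSeq T ∧ T.WF ∧ T.SameGraph (.series l r) := by
  induction hl with
  | single hb => exact ⟨_, .cons hb hr, h, .refl _⟩
  | @cons b l' hb _ ih =>
    obtain ⟨⟨hb', hl', hbl, hbl'⟩, hr', hlr, hlr'⟩ := h
    change l'.tgt = r.src at hlr
    change (b.verts ∪ l'.verts) ∩ r.verts = {l'.tgt} at hlr'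
    have mem : ∀ x, x ∈ b.verts ∨ x ∈ l'.verts → x ∈ r.verts → x = l'.tgt := by
      intro x hx hx'
      have : x ∈ (b.verts ∪ l'.verts) ∩ r.verts := ⟨hx, hx'⟩
      rwa [hlr'] at this
    have inter : l'.verts ∩ r.verts = {l'.tgt} := by
      refine Set.Subset.antisymm (fun x hx => mem x (Or.inr hx.1) hx.2) ?_
      rintro _ rfl
      exact ⟨l'.tgt_mem_verts, hlr ▸ r.src_mem_verts⟩
    obtain ⟨T, hT, wT, same⟩ := ih ⟨hl', hr', hlr, inter⟩
    refine ⟨_, .cons hb hT, ⟨hb', wT, hbl.trans same.src_eq.symm, ?_⟩, rfl, same.tgt_eq, ?_, ?_⟩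
    · rw [same.verts_eq, SPTree.verts, Set.inter_union_distrib_left, hbl', Set.union_eq_left]
      rintro x ⟨hx, hx'⟩
      rw [← hbl']
      exact ⟨hx, mem x (Or.inl hx) hx' ▸ l'.tgt_mem_verts⟩
    · simp only [SPTree.verts, same.verts_eq, Set.union_assoc]
    · simp only [SPTree.edges, same.edges_eq, Set.union_assoc]

theorem IsPearlChain.exists_isBeadSeq (h : IsPearlChain T) (hT : T.WF) :
    ∃ T' : SPTree V, IsBeadSeq T' ∧ T'.WF ∧ T'.SameGraph T := by
  induction h with
  | edge u v => exact ⟨_, .single (Or.inl ⟨u, v, rfl⟩), hT, .refl _⟩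
  | pearl hp => exact ⟨_, .single (Or.inr hp), hT, .refl _⟩
  | series _ _ ihl ihr =>
    obtain ⟨l', hl, wl, sl, tl, vl, el⟩ := ihl hT.1
    obtain ⟨r', hr, wr, sr, tr, vr, er⟩ := ihr hT.2.1
    obtain ⟨T', hT', wT', sT', tT', vT', eT'⟩ := hl.append hr
      ⟨wl, wr, by rw [tl, sr, hT.2.2.1], by rw [vl, vr, tl, hT.2.2.2]⟩
    exact ⟨T', hT', wT', sT'.trans sl, tT'.trans tr, vT'.trans (congrArg₂ (· ∪ ·) vl vr),
      eT'.trans (congrArg₂ (· ∪ ·) el er)⟩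

theorem IsBead.isPearlChain (h : IsBead T) : IsPearlChain T := by
  rcases h with ⟨u, v, rfl⟩ | h
  exacts [.edge u v, .pearl h]

theorem IsBeadSeq.isPearlChain (h : IsBeadSeq T) : IsPearlChain T := by
  induction h with
  | single hb => exact hb.isPearlChain
  | cons hb _ ih => exact hb.isPearlChain.series ih

theorem PearlTail.isPearlChain (h : PearlTail T) : IsPearlChain T := by
  induction h with
  | base u v => exact .edge u v
  | consEdge u v _ ih => exact (IsPearlChain.edge u v).series ih
  | consPearl hp _ ih => exact (IsPearlChain.pearl hp).series ih

theorem IsPearlNecklace.isPearlChain (h : IsPearlNecklace T) : IsPearlChain T := by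
  obtain ⟨u, v, r, rfl, hr⟩ := h
  exact (IsPearlChain.edge u v).series hr.isPearlChain

theorem IsBeadSeq.pearlTail_or_edgeBounded (h : IsBeadSeq T) (hT : T.WF) :
    PearlTail T ∨ T.EdgeBounded 2 0 1 (-2) := by
  induction h with
  | single hb =>
    rcases hb with ⟨u, v, rfl⟩ | hp
    · exact Or.inl (.base u v)
    · exact Or.inr (hp.edgeBounded_src hT)
  | cons hb _ ih =>
    rcases ih hT.2.1 with hr | hr
    · rcases hb with ⟨u, v, rfl⟩ | hp
      · exact Or.inl (.consEdge u v hr)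
      · exact Or.inl (.consPearl hp hr)
    · exact Or.inr (hr.series_right hT hb.isPearlChain.bounded)

theorem IsBeadSeq.isPearlNecklace (h : IsBeadSeq T) (hT : T.WF) (hne : ∀ u v, T ≠ .edge u v)
    (hb : ¬ T.EdgeBounded 2 1 1 (-2)) : IsPearlNecklace T := by
  rcases h with hbead | ⟨hbead, hr⟩ <;> rcases hbead with ⟨u, v, rfl⟩ | hp
  · exact (hne u v rfl).elim
  · exact (hb (hp.edgeBounded_src hT).mono).elim
  · refine ⟨u, v, _, rfl, (hr.pearlTail_or_edgeBounded hT.2.1).resolve_right fun hr' => hb ?_⟩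
    exact hr'.series_right hT (IsPearlChain.edge u v).bounded
  · exact (hb ((hp.edgeBounded_tgt hT.1).series_left hT hr.isPearlChain.bounded)).elim

theorem IsPathT.reaches_disconn (h : IsPathT T n) (hT : T.WF) {e : Sym2 V} (he : e ∈ T.edges) :
    (T.profiles {e}).Reaches false false false 0 := by
  induction h with
  | edge u v =>
    obtain rfl : e = s(u, v) := he
    rw [SPTree.profiles_edge_singleton]
    exact reaches_of_mem ⟨rfl, rfl, rfl⟩
  | @series l r _ _ _ _ ihl ihr =>
    rcases he with he | he
    · rw [hT.profiles_series_left he]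
      exact (ihl hT.1 he).ser_keep r.intact_profiles.reaches_none
    · rw [hT.profiles_series_right he]
      exact l.intact_profiles.reaches_none.ser_keep (ihr hT.2.1 he)

theorem IsPathT.gains (h : IsPathT T n) (hn : 2 ≤ n) (hT : T.WF) {e : Sym2 V}
    (he : e ∈ T.edges) : (T.profiles {e}).GainsSrc ∨ (T.profiles {e}).GainsTgt := by
  cases h with
  | edge u v => omega
  | @series l r _ _ hl hr =>
    rcases he with he | he
    · rw [hT.profiles_series_left he]
      exact Or.inr ((hl.reaches_disconn hT.1 he).ser_keep r.intact_profiles.reaches_tgt)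
    · rw [hT.profiles_series_right he]
      exact Or.inl (l.intact_profiles.reaches_src.ser_keep (hr.reaches_disconn hT.2.1 he))

theorem IsPearl.gains (h : IsPearl T) (hT : T.WF) {e : Sym2 V} (he : e ∈ T.edges) :
    (T.profiles {e}).GainsSrc ∨ (T.profiles {e}).GainsTgt := by
  obtain ⟨l, r, m, n, rfl, hl, hr, hm, hn⟩ := h
  rcases he with he | he
  · rw [hT.profiles_parallel_left he]
    exact (hl.gains hm hT.1 he).imp (·.par r.intact_profiles.reaches_src)
      (·.par r.intact_profiles.reaches_tgt)
  · rw [hT.profiles_parallel_right he]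
    exact (hr.gains hn hT.2.1 he).imp l.intact_profiles.reaches_src.par
      l.intact_profiles.reaches_tgt.par

theorem splits_series_edge {u v : V} (hT : (SPTree.series (.edge u v) r).WF)
    (hr : ∀ e ∈ r.edges, (r.profiles {e}).GainsSrc ∨ (r.profiles {e}).Splits) {e : Sym2 V}
    (he : e ∈ (SPTree.series (.edge u v) r).edges) :
    ((SPTree.series (.edge u v) r).profiles {e}).Splits := by
  have iuv := (SPTree.edge u v).intact_profiles
  rcases he with he | he
  · rw [hT.profiles_series_left he]
    exact (((IsPathT.edge u v).reaches_disconn hT.1 he).ser_keep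
      r.intact_profiles.reaches_none).mono (by decide)
  · rw [hT.profiles_series_right he]
    exact (hr e he).elim iuv.reaches_tgt.ser_delete iuv.reaches_none.ser_keep

theorem PearlTail.gainsSrc_or_splits (h : PearlTail T) (hT : T.WF) {e : Sym2 V}
    (he : e ∈ T.edges) : (T.profiles {e}).GainsSrc ∨ (T.profiles {e}).Splits := by
  induction h generalizing e with
  | base u v => exact Or.inr (((IsPathT.edge u v).reaches_disconn hT he).mono (by decide))
  | consEdge u v _ ih => exact Or.inr (splits_series_edge hT (fun e he => ih hT.2.1 he) he)
  | @consPearl p r hp _ ih =>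
    rcases he with he | he
    · rw [hT.profiles_series_left he]
      exact (hp.gains hT.1 he).imp (·.ser_keep r.intact_profiles.reaches_none)
        (·.ser_delete r.intact_profiles.reaches_src)
    · rw [hT.profiles_series_right he]
      exact (ih hT.2.1 he).imp hp.reaches.ser_delete p.intact_profiles.reaches_none.ser_keep

theorem IsPearlNecklace.not_tough (h : IsPearlNecklace T) (hT : T.WF) {e : Sym2 V}
    (he : e ∈ T.edges) : ¬ Tough (T.profiles {e}) isolated := by
  obtain ⟨u, v, r, rfl, hr⟩ := h
  exact (splits_series_edge hT (fun e he => hr.gainsSrc_or_splits hT.2.1 he) he).not_tough_isolated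

theorem IsPearlNecklace.tough (h : IsPearlNecklace T) : Tough (T.profiles ∅) isolated :=
  h.isPearlChain.bounded.mono.tough_isolated

/-- Witnessed by the deletion of the second vertex of the necklace. -/
theorem IsPearlNecklace.profiles_disconn (h : IsPearlNecklace T) :
    T.profiles ∅ false false false true (-2) := by
  obtain ⟨u, v, r, rfl, -⟩ := h
  exact ⟨_, _, _, _, _, _, _, (SPTree.intact_profiles _).tgt, r.intact_profiles.src, rfl, rfl, rfl⟩

end Necklaces

/-! ### Counting components -/

section Components

variable {V : Type*} {G : SimpleGraph V} {u v x y : V}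

/-- The graph whose only edge is the one between `u` and `v` if `c` holds, and the graph without
edges otherwise: the part of a series-parallel graph that is visible from its terminals. -/
def condEdge (c : Bool) (u v : V) : SimpleGraph V := if c then edge u v else ⊥

theorem condEdge_adj {c : Bool} :
    (condEdge c u v).Adj x y ↔ c = true ∧ (x = u ∧ y = v ∨ x = v ∧ y = u) ∧ x ≠ y := by
  cases c
  · simp [condEdge]
  · simp only [condEdge, if_true, edge_adj, true_and]

theorem condEdge_sup_condEdge (c c' : Bool) (u v : V) :
    condEdge c u v ⊔ condEdge c' u v = condEdge (c || c') u v := by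
  cases c <;> cases c' <;> simp [condEdge]

theorem reachable_condEdge (u v : V) : (condEdge true u v).Reachable u v := by
  by_cases huv : u = v
  · exact huv ▸ Reachable.refl _
  · exact Adj.reachable (condEdge_adj.2 ⟨rfl, Or.inl ⟨rfl, rfl⟩, huv⟩)

theorem reachable_sup_condEdge {c : Bool} : (G ⊔ condEdge c u v).Reachable x y ↔
    G.Reachable x y ∨ c = true ∧
      (G.Reachable x u ∧ G.Reachable v y ∨ G.Reachable x v ∧ G.Reachable u y) := by
  constructor
  · rw [reachable_iff_reflTransGen]
    intro h
    induction h using Relation.ReflTransGen.head_induction_on with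
    | refl => exact Or.inl (Reachable.refl _)
    | head hadj _ ih =>
      rcases hadj with hadj | hadj
      · have := hadj.reachable
        exact ih.imp this.trans (And.imp_right (Or.imp (And.imp_left this.trans)
          (And.imp_left this.trans)))
      · have hu := Reachable.refl (G := G) u
        have hv := Reachable.refl (G := G) v
        obtain ⟨hc, ⟨rfl, rfl⟩ | ⟨rfl, rfl⟩, -⟩ := condEdge_adj.1 hadj <;> tauto
  · have mono {a b : V} (h : G.Reachable a b) : (G ⊔ condEdge c u v).Reachable a b :=
      h.mono le_sup_left
    rintro (h | ⟨rfl, h⟩)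
    · exact mono h
    · have huv : (G ⊔ condEdge true u v).Reachable u v :=
        (reachable_condEdge u v).mono le_sup_right
      rcases h with ⟨h, h'⟩ | ⟨h, h'⟩
      · exact (mono h).trans (huv.trans (mono h'))
      · exact (mono h).trans (huv.symm.trans (mono h'))

theorem reachable_iff_eq_of_isolated (hx : ∀ y, ¬ G.Adj x y) : G.Reachable x y ↔ x = y := by
  refine ⟨fun h => ?_, fun h => h ▸ Reachable.refl _⟩
  rw [reachable_iff_reflTransGen] at h
  rcases h.cases_head with h | ⟨z, hz, -⟩
  exacts [h, (hx z hz).elim]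

open Classical in
/-- Reachability as a Boolean, for use in counting formulas. -/
noncomputable def reach (G : SimpleGraph V) (u v : V) : Bool := decide (G.Reachable u v)

theorem reach_eq_true_iff : reach G u v = true ↔ G.Reachable u v := by simp [reach]

theorem reach_eq_false_iff : reach G u v = false ↔ ¬ G.Reachable u v := by simp [reach]

theorem card_connectedComponent_sup_condEdge_of_not_reachable [Finite V]
    (h : ¬ G.Reachable u v) : Nat.card G.ConnectedComponent =
      Nat.card (G ⊔ condEdge true u v).ConnectedComponent + 1 := by
  let φ : {C : G.ConnectedComponent // C ≠ G.connectedComponentMk v} →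
      (G ⊔ condEdge true u v).ConnectedComponent :=
    fun C => C.1.map (Hom.ofLE le_sup_left)
  have hφ : Function.Bijective φ := by
    constructor
    · rintro ⟨C, hC⟩ ⟨D, hD⟩ hCD
      induction C using ConnectedComponent.ind with | h x => ?_
      induction D using ConnectedComponent.ind with | h y => ?_
      have hxy := reachable_sup_condEdge.1 (ConnectedComponent.exact hCD)
      rw [Ne, ConnectedComponent.eq] at hC hD
      refine Subtype.ext (ConnectedComponent.sound ?_)
      rcases hxy with hxy | ⟨-, ⟨-, hxy⟩ | ⟨hxy, -⟩⟩
      exacts [hxy, (hD hxy.symm).elim, (hC hxy).elim]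
    · intro C
      induction C using ConnectedComponent.ind with | h x => ?_
      by_cases hx : G.Reachable x v
      · refine ⟨⟨G.connectedComponentMk u, fun h' => h (ConnectedComponent.exact h')⟩, ?_⟩
        exact ConnectedComponent.sound (reachable_sup_condEdge.2 (Or.inr
          ⟨rfl, Or.inl ⟨Reachable.refl _, hx.symm⟩⟩))
      · exact ⟨⟨G.connectedComponentMk x, fun h' => hx (ConnectedComponent.exact h')⟩, rfl⟩
  rw [← Nat.card_congr (Equiv.ofBijective φ hφ),
    ← Set.ncard_add_ncard_compl {G.connectedComponentMk v}, Set.ncard_singleton, add_comm]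
  rfl

theorem card_connectedComponent_sup_condEdge [Finite V] (c : Bool) :
    Nat.card G.ConnectedComponent = Nat.card (G ⊔ condEdge c u v).ConnectedComponent +
      (c && !reach G u v).toNat := by
  by_cases h : c = true ∧ ¬ G.Reachable u v
  · obtain ⟨rfl, h⟩ := h
    rw [card_connectedComponent_sup_condEdge_of_not_reachable h, reach_eq_false_iff.2 h]
    rfl
  · have same (x y : V) : G.Reachable x y ↔ (G ⊔ condEdge c u v).Reachable x y := by
      rw [reachable_sup_condEdge, iff_self_or]
      rintro ⟨rfl, hxy⟩
      have huv : G.Reachable u v := by simpa using h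
      rcases hxy with ⟨h₁, h₂⟩ | ⟨h₁, h₂⟩
      exacts [h₁.trans (huv.trans h₂), h₁.trans (huv.symm.trans h₂)]
    have hc : (c && !reach G u v) = false := by simpa [reach_eq_true_iff] using h
    rw [hc, Bool.toNat_false, add_zero]
    exact Nat.card_congr (Quot.congrRight same)

theorem reachable_induce_compl {H : SimpleGraph V} {S : Set V}
    (h : ∀ x y, H.Adj x y → G.Adj x y ∧ x ∉ S ∧ y ∉ S) (hxy : H.Reachable x y)
    (hx : x ∉ S) (hy : y ∉ S) : (induce Sᶜ G).Reachable ⟨x, hx⟩ ⟨y, hy⟩ := by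
  rw [reachable_iff_reflTransGen] at hxy
  induction hxy using Relation.ReflTransGen.head_induction_on with
  | refl => exact Reachable.refl _
  | @head a b hab _ ih =>
    obtain ⟨hab, -, hb⟩ := h a b hab
    have step : (induce Sᶜ G).Adj ⟨a, hx⟩ ⟨b, hb⟩ := hab
    exact step.reachable.trans (ih hb)

/-- Instead of deleting the vertices in `S`, one may isolate them: each of them then contributes
a component of its own. -/
theorem numComp_add_ncard [Finite V] {H : SimpleGraph V} {S : Set V}
    (h : ∀ x y, H.Adj x y ↔ G.Adj x y ∧ x ∉ S ∧ y ∉ S) :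
    numComp G S + S.ncard = Nat.card H.ConnectedComponent := by
  have isolated {x y : V} (hx : x ∈ S) : H.Reachable x y ↔ x = y :=
    reachable_iff_eq_of_isolated fun z hz => ((h x z).1 hz).2.1 hx
  let ι : induce Sᶜ G →g H := ⟨Subtype.val, fun {a b} hab => (h a b).2 ⟨hab, a.2, b.2⟩⟩
  let φ : (induce Sᶜ G).ConnectedComponent ⊕ S → H.ConnectedComponent :=
    Sum.elim (fun C => C.map ι) fun x => H.connectedComponentMk x
  have ne (x : ↥Sᶜ) (y : S) : ¬ H.Reachable x y := fun hxy => by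
    have : (y : V) = x := (isolated y.2).1 hxy.symm
    exact x.2 (this ▸ y.2)
  have hφ : Function.Bijective φ := by
    constructor
    · rintro (C | x) (D | y) hCD
      · induction C using ConnectedComponent.ind with | h x => ?_
        induction D using ConnectedComponent.ind with | h y => ?_
        exact congrArg _ (ConnectedComponent.sound (reachable_induce_compl
          (fun x y => (h x y).1) (ConnectedComponent.exact hCD) x.2 y.2))
      · induction C using ConnectedComponent.ind with | h x => ?_
        exact (ne x y (ConnectedComponent.exact hCD)).elim
      · induction D using ConnectedComponent.ind with | h y => ?_
        exact (ne y x (ConnectedComponent.exact hCD.symm)).elim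
      · exact congrArg _ (Subtype.ext ((isolated x.2).1 (ConnectedComponent.exact hCD)))
    · intro C
      induction C using ConnectedComponent.ind with | h x => ?_
      by_cases hx : x ∈ S
      · exact ⟨Sum.inr ⟨x, hx⟩, rfl⟩
      · exact ⟨Sum.inl (connectedComponentMk _ ⟨x, hx⟩), rfl⟩
  rw [← Nat.card_congr (Equiv.ofBijective φ hφ), Nat.card_sum]
  rfl

end Components

namespace SPTree

variable {V : Type*} {F : Set (Sym2 V)} {S S' : Set V} {T l r : SPTree V}
  {G H : SimpleGraph V} {x y : V}

open Classical in
/-- Membership in `S` as a Boolean, for use in profiles and counting formulas. -/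
noncomputable def mem (S : Set V) (x : V) : Bool := decide (x ∈ S)

theorem mem_eq_true_iff : mem S x = true ↔ x ∈ S := by simp [mem]

theorem mem_congr (h : x ∈ S ↔ x ∈ S') : mem S x = mem S' x :=
  decide_eq_decide.2 h

open Classical in
/-- Whether the terminals are connected after deleting the edges in `F` and the vertices in `S`. -/
noncomputable def conn (F : Set (Sym2 V)) (S : Set V) : SPTree V → Bool
  | edge u v => decide (s(u, v) ∉ F) && !mem S u && !mem S v
  | series l r => l.conn F S && r.conn F S
  | parallel l r => l.conn F S || r.conn F S

/-- The number of components that contain no terminal after deleting the edges in `F` and the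
vertices in `S`. -/
noncomputable def pieces (F : Set (Sym2 V)) (S : Set V) : SPTree V → ℕ
  | edge _ _ => 0
  | series l r => l.pieces F S + r.pieces F S +
      (!(mem S l.tgt || l.conn F S || r.conn F S)).toNat
  | parallel l r => l.pieces F S + r.pieces F S

/-- The number of vertices in `S` other than the terminals. -/
noncomputable def cuts (S : Set V) : SPTree V → ℕ
  | edge _ _ => 0
  | series l r => l.cuts S + r.cuts S + (mem S l.tgt).toNat
  | parallel l r => l.cuts S + r.cuts S

/-- The gain of `S` in the sense of `Profiles`. -/
noncomputable def gain (F : Set (Sym2 V)) (S : Set V) (T : SPTree V) : ℤ :=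
  T.pieces F S - 2 * T.cuts S

theorem decide_pos_add (m n : ℕ) : decide (0 < m + n) = (decide (0 < m) || decide (0 < n)) := by
  grind

theorem gain_series (l r : SPTree V) : (series l r).gain F S = l.gain F S + r.gain F S +
    (!(mem S l.tgt || l.conn F S || r.conn F S)).toInt - 2 * (mem S l.tgt).toInt := by
  simp only [gain, pieces, cuts]
  generalize mem S l.tgt = k, l.conn F S = c₁, r.conn F S = c₂
  cases k <;> cases c₁ <;> cases c₂ <;> simp <;> ring

theorem gain_parallel (l r : SPTree V) :
    (parallel l r).gain F S = l.gain F S + r.gain F S := by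
  simp only [gain, pieces, cuts, Nat.cast_add]
  ring

theorem cuts_series_pos (l r : SPTree V) : decide (0 < (series l r).cuts S) =
    (decide (0 < l.cuts S) || decide (0 < r.cuts S) || mem S l.tgt) := by
  cases h : mem S l.tgt <;> simp [cuts, h]

theorem cuts_parallel_pos (l r : SPTree V) : decide (0 < (parallel l r).cuts S) =
    (decide (0 < l.cuts S) || decide (0 < r.cuts S)) :=
  decide_pos_add _ _

theorem WF.profiles_of_set (hT : T.WF) (F : Set (Sym2 V)) (S : Set V) :
    T.profiles F (mem S T.src) (mem S T.tgt) (T.conn F S) (decide (0 < T.cuts S))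
      (T.gain F S) := by
  induction T with
  | edge u v => exact ⟨rfl, rfl, rfl⟩
  | series l r hl hr =>
    refine ⟨mem S l.tgt, _, _, _, _, _, _, hl hT.1, ?_, rfl, cuts_series_pos l r,
      gain_series l r⟩
    rw [hT.2.2.1]
    exact hr hT.2.1
  | parallel l r hl hr =>
    refine ⟨_, _, _, _, _, _, hl hT.1, ?_, rfl, cuts_parallel_pos l r, gain_parallel l r⟩
    rw [src, tgt, hT.2.2.1, hT.2.2.2.1]
    exact hr hT.2.1

theorem conn_congr (h : ∀ x ∈ T.verts, x ∈ S ↔ x ∈ S') : T.conn F S = T.conn F S' := by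
  induction T with
  | edge u v => rw [conn, conn, mem_congr (h u (Or.inl rfl)), mem_congr (h v (Or.inr rfl))]
  | series l r hl hr | parallel l r hl hr =>
    rw [conn, conn, hl fun x hx => h x (Or.inl hx), hr fun x hx => h x (Or.inr hx)]

theorem pieces_congr (h : ∀ x ∈ T.verts, x ∈ S ↔ x ∈ S') : T.pieces F S = T.pieces F S' := by
  induction T with
  | edge u v => rfl
  | series l r hl hr =>
    have h₁ : ∀ x ∈ l.verts, x ∈ S ↔ x ∈ S' := fun x hx => h x (Or.inl hx)
    have h₂ : ∀ x ∈ r.verts, x ∈ S ↔ x ∈ S' := fun x hx => h x (Or.inr hx)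
    simp only [pieces, hl h₁, hr h₂, conn_congr h₁, conn_congr h₂,
      mem_congr (h₁ _ l.tgt_mem_verts)]
  | parallel l r hl hr =>
    rw [pieces, pieces, hl fun x hx => h x (Or.inl hx), hr fun x hx => h x (Or.inr hx)]

theorem cuts_congr (h : ∀ x ∈ T.verts, x ∈ S ↔ x ∈ S') : T.cuts S = T.cuts S' := by
  induction T with
  | edge u v => rfl
  | series l r hl hr =>
    have h₁ : ∀ x ∈ l.verts, x ∈ S ↔ x ∈ S' := fun x hx => h x (Or.inl hx)
    have h₂ : ∀ x ∈ r.verts, x ∈ S ↔ x ∈ S' := fun x hx => h x (Or.inr hx)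
    simp only [cuts, hl h₁, hr h₂, mem_congr (h₁ _ l.tgt_mem_verts)]
  | parallel l r hl hr =>
    rw [cuts, cuts, hl fun x hx => h x (Or.inl hx), hr fun x hx => h x (Or.inr hx)]

theorem gain_congr (h : ∀ x ∈ T.verts, x ∈ S ↔ x ∈ S') : T.gain F S = T.gain F S' := by
  rw [gain, gain, pieces_congr h, cuts_congr h]

/-- `T.Realizes F i j c t w S` says that deleting `S` has the effect that `Profiles` records as
`i j c t w`. -/
structure Realizes (T : SPTree V) (F : Set (Sym2 V)) (i j c t : Bool) (w : ℤ) (S : Set V) :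
    Prop where
  subset : S ⊆ T.verts
  mem_src : mem S T.src = i
  mem_tgt : mem S T.tgt = j
  conn : T.conn F S = c
  cuts_pos : decide (0 < T.cuts S) = t
  gain : T.gain F S = w

theorem mem_union_left_iff {A B S₁ S₂ : Set V} (hB : S₂ ⊆ B)
    (h : ∀ x ∈ A, x ∈ B → (x ∈ S₁ ↔ x ∈ S₂)) : ∀ x ∈ A, x ∈ S₁ ∪ S₂ ↔ x ∈ S₁ :=
  fun x hx => or_iff_left_of_imp fun hx' => (h x hx (hB hx')).2 hx'

theorem WF.exists_realizes_edge {u v : V} (hT : (edge u v).WF) {i j c t : Bool} {w : ℤ}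
    (h : (edge u v).profiles F i j c t w) : ∃ S, (edge u v).Realizes F i j c t w S := by
  obtain ⟨rfl, rfl, rfl⟩ := h
  have huv : u ≠ v := hT
  let S : Set V := {x | x = u ∧ i = true ∨ x = v ∧ j = true}
  have hu : mem S u = i := by
    rw [Bool.eq_iff_iff, mem_eq_true_iff]
    simp [S, huv]
  have hv : mem S v = j := by
    rw [Bool.eq_iff_iff, mem_eq_true_iff]
    simp [S, huv.symm]
  refine ⟨S, ?_, hu, hv, ?_, rfl, rfl⟩
  · rintro x (⟨rfl, -⟩ | ⟨rfl, -⟩)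
    exacts [Or.inl rfl, Or.inr rfl]
  · rw [conn, hu, hv]

theorem WF.realizes_series (hT : (series l r).WF) {i j k c₁ c₂ t₁ t₂ : Bool} {w₁ w₂ : ℤ}
    {S₁ S₂ : Set V} (h₁ : l.Realizes F i k c₁ t₁ w₁ S₁) (h₂ : r.Realizes F k j c₂ t₂ w₂ S₂) :
    (series l r).Realizes F i j (c₁ && c₂) (t₁ || t₂ || k)
      (w₁ + w₂ + (!(k || c₁ || c₂)).toInt - 2 * k.toInt) (S₁ ∪ S₂) := by
  have agree : ∀ x, x ∈ l.verts → x ∈ r.verts → (x ∈ S₁ ↔ x ∈ S₂) := by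
    intro x hl hr
    obtain rfl := hT.eq_of_mem hl hr
    rw [← mem_eq_true_iff, ← mem_eq_true_iff, h₁.mem_tgt, hT.2.2.1, h₂.mem_src]
  have hS₁ := mem_union_left_iff h₂.subset fun x hl hr => agree x hl hr
  have hS₂ := mem_union_left_iff h₁.subset fun x hr hl => (agree x hl hr).symm
  rw [Set.union_comm] at hS₂
  have hk : mem (S₁ ∪ S₂) l.tgt = k := (mem_congr (hS₁ _ l.tgt_mem_verts)).trans h₁.mem_tgt
  exact {
    subset := Set.union_subset_union h₁.subset h₂.subset
    mem_src := (mem_congr (hS₁ _ l.src_mem_verts)).trans h₁.mem_src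
    mem_tgt := (mem_congr (hS₂ _ r.tgt_mem_verts)).trans h₂.mem_tgt
    conn := by rw [conn, conn_congr hS₁, conn_congr hS₂, h₁.conn, h₂.conn]
    cuts_pos := by
      rw [cuts_series_pos, cuts_congr hS₁, cuts_congr hS₂, hk, h₁.cuts_pos, h₂.cuts_pos]
    gain := by
      rw [gain_series, gain_congr hS₁, gain_congr hS₂, conn_congr hS₁, conn_congr hS₂, hk,
        h₁.gain, h₂.gain, h₁.conn, h₂.conn] }

theorem WF.realizes_parallel (hT : (parallel l r).WF) {i j c₁ c₂ t₁ t₂ : Bool} {w₁ w₂ : ℤ}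
    {S₁ S₂ : Set V} (h₁ : l.Realizes F i j c₁ t₁ w₁ S₁) (h₂ : r.Realizes F i j c₂ t₂ w₂ S₂) :
    (parallel l r).Realizes F i j (c₁ || c₂) (t₁ || t₂) (w₁ + w₂) (S₁ ∪ S₂) := by
  have agree : ∀ x, x ∈ l.verts → x ∈ r.verts → (x ∈ S₁ ↔ x ∈ S₂) := by
    intro x hl hr
    rw [← mem_eq_true_iff, ← mem_eq_true_iff]
    rcases hT.eq_or_eq_of_mem hl hr with rfl | rfl
    · rw [h₁.mem_src, hT.2.2.1, h₂.mem_src]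
    · rw [h₁.mem_tgt, hT.2.2.2.1, h₂.mem_tgt]
  have hS₁ := mem_union_left_iff h₂.subset fun x hl hr => agree x hl hr
  have hS₂ := mem_union_left_iff h₁.subset fun x hr hl => (agree x hl hr).symm
  rw [Set.union_comm] at hS₂
  exact {
    subset := Set.union_subset_union h₁.subset h₂.subset
    mem_src := (mem_congr (hS₁ _ l.src_mem_verts)).trans h₁.mem_src
    mem_tgt := (mem_congr (hS₁ _ l.tgt_mem_verts)).trans h₁.mem_tgt
    conn := by rw [conn, conn_congr hS₁, conn_congr hS₂, h₁.conn, h₂.conn]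
    cuts_pos := by
      rw [cuts_parallel_pos, cuts_congr hS₁, cuts_congr hS₂, h₁.cuts_pos, h₂.cuts_pos]
    gain := by rw [gain_parallel, gain_congr hS₁, gain_congr hS₂, h₁.gain, h₂.gain] }

theorem WF.exists_realizes (hT : T.WF) {i j c t : Bool} {w : ℤ}
    (h : T.profiles F i j c t w) : ∃ S, T.Realizes F i j c t w S := by
  induction T generalizing i j c t w with
  | edge u v => exact hT.exists_realizes_edge h
  | series l r hl hr =>
    obtain ⟨k, c₁, t₁, w₁, c₂, t₂, w₂, h₁, h₂, rfl, rfl, rfl⟩ := h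
    obtain ⟨S₁, h₁⟩ := hl hT.1 h₁
    obtain ⟨S₂, h₂⟩ := hr hT.2.1 h₂
    exact ⟨_, hT.realizes_series h₁ h₂⟩
  | parallel l r hl hr =>
    obtain ⟨c₁, t₁, w₁, c₂, t₂, w₂, h₁, h₂, rfl, rfl, rfl⟩ := h
    obtain ⟨S₁, h₁⟩ := hl hT.1 h₁
    obtain ⟨S₂, h₂⟩ := hr hT.2.1 h₂
    exact ⟨_, hT.realizes_parallel h₁ h₂⟩

theorem WF.ncard_inter_edge {u v : V} (hT : (edge u v).WF) (S : Set V) :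
    ((edge u v).verts ∩ S).ncard = (mem S u).toNat + (mem S v).toNat := by
  have : u ≠ v := hT
  by_cases h : u ∈ S <;> by_cases h' : v ∈ S <;>
    simp [h, h', mem, verts, Set.insert_inter_of_mem, Set.insert_inter_of_notMem,
      Set.ncard_pair this]

theorem WF.ncard_inter_series [Finite V] (hT : (series l r).WF) (S : Set V) :
    ((series l r).verts ∩ S).ncard + (mem S l.tgt).toNat =
      (l.verts ∩ S).ncard + (r.verts ∩ S).ncard := by
  rw [← Set.ncard_union_add_ncard_inter, ← Set.union_inter_distrib_right,
    ← Set.inter_inter_distrib_right, hT.2.2.2]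
  by_cases h : l.tgt ∈ S <;> simp [h, mem, verts]

theorem WF.ncard_inter_parallel [Finite V] (hT : (parallel l r).WF) (S : Set V) :
    ((parallel l r).verts ∩ S).ncard + (mem S l.src).toNat + (mem S l.tgt).toNat =
      (l.verts ∩ S).ncard + (r.verts ∩ S).ncard := by
  rw [← Set.ncard_union_add_ncard_inter, ← Set.union_inter_distrib_right,
    ← Set.inter_inter_distrib_right, hT.2.2.2.2.1, add_assoc,
    ← WF.ncard_inter_edge (show (edge l.src l.tgt).WF from hT.1.src_ne_tgt)]
  rfl

theorem WF.ncard_inter [Finite V] (hT : T.WF) (S : Set V) : (T.verts ∩ S).ncard =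
    T.cuts S + (mem S T.src).toNat + (mem S T.tgt).toNat := by
  induction T with
  | edge u v => simp [hT.ncard_inter_edge S, cuts, src, tgt]
  | series l r hl hr =>
    have := hT.ncard_inter_series S
    have hl := hl hT.1
    have hr := hr hT.2.1
    simp only [cuts, src, tgt, hT.2.2.1] at *
    omega
  | parallel l r hl hr =>
    have := hT.ncard_inter_parallel S
    have hl := hl hT.1
    have hr := hr hT.2.1
    simp only [cuts, src, tgt, hT.2.2.1, hT.2.2.2.1] at *
    omega

/-- The graph of `T` without the edges in `F` and the edges that meet `S`. -/
noncomputable def alive (F : Set (Sym2 V)) (S : Set V) : SPTree V → SimpleGraph V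
  | edge u v => condEdge ((edge u v).conn F S) u v
  | series l r => l.alive F S ⊔ r.alive F S
  | parallel l r => l.alive F S ⊔ r.alive F S

theorem alive_adj : (T.alive F S).Adj x y ↔
    x ≠ y ∧ s(x, y) ∈ T.edges ∧ s(x, y) ∉ F ∧ x ∉ S ∧ y ∉ S := by
  induction T with
  | edge u v =>
    simp only [alive, condEdge_adj, conn, edges, Set.mem_singleton_iff]
    constructor
    · rintro ⟨h, ⟨rfl, rfl⟩ | ⟨rfl, rfl⟩, hne⟩
      · simp_all [mem]
      · rw [Sym2.eq_swap]
        simp_all [mem]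
    · rintro ⟨hne, h, h'⟩
      rcases Sym2.eq_iff.1 h with ⟨rfl, rfl⟩ | ⟨rfl, rfl⟩
      · simp_all [mem]
      · rw [Sym2.eq_swap] at h'
        simp_all [mem]
  | series l r hl hr | parallel l r hl hr =>
    simp only [alive, sup_adj, hl, hr, edges, Set.mem_union]
    tauto

theorem mem_verts_of_alive_adj (h : (T.alive F S).Adj x y) : x ∈ T.verts :=
  mem_verts_of_mem_edges (alive_adj.1 h).2.1 (Sym2.mem_mk_left x y)

/-- `x` is not an inner vertex of `T`. -/
def Outer (T : SPTree V) (x : V) : Prop := x ∈ T.verts → x = T.src ∨ x = T.tgt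

/-- No inner vertex of `T` has a neighbor in `G`, so that `G` and `T` can be glued along the
terminals of `T`. -/
def Avoids (T : SPTree V) (G : SimpleGraph V) : Prop := ∀ ⦃x y⦄, G.Adj x y → T.Outer x

theorem outer_src (T : SPTree V) : T.Outer T.src := fun _ => Or.inl rfl

theorem outer_tgt (T : SPTree V) : T.Outer T.tgt := fun _ => Or.inr rfl

theorem Avoids.sup (hG : T.Avoids G) (hH : T.Avoids H) : T.Avoids (G ⊔ H) :=
  fun _ _ hxy => hxy.elim (fun h => hG h) (fun h => hH h)

theorem avoids_condEdge {c : Bool} {u v : V} (hu : T.Outer u) (hv : T.Outer v) :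
    T.Avoids (condEdge c u v) := by
  intro x y hxy
  obtain ⟨-, ⟨rfl, -⟩ | ⟨rfl, -⟩, -⟩ := condEdge_adj.1 hxy
  exacts [hu, hv]

theorem WF.outer_series_left (hT : (series l r).WF) (hx : (series l r).Outer x) : l.Outer x :=
  fun hl => (hx (Or.inl hl)).imp_right fun h =>
    hT.eq_of_mem hl (Set.mem_of_eq_of_mem h r.tgt_mem_verts)

theorem WF.outer_series_right (hT : (series l r).WF) (hx : (series l r).Outer x) : r.Outer x :=
  fun hr => (hx (Or.inr hr)).imp_left fun h =>
    (hT.eq_of_mem (Set.mem_of_eq_of_mem h l.src_mem_verts) hr).trans hT.2.2.1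

theorem WF.outer_left_tgt (hT : (series l r).WF) : l.Outer r.tgt :=
  fun h => Or.inr (hT.eq_of_mem h r.tgt_mem_verts)

theorem WF.avoids_series_alive (hT : (series l r).WF) : r.Avoids (l.alive F S) :=
  fun _ _ hxy hx => Or.inl ((hT.eq_of_mem (mem_verts_of_alive_adj hxy) hx).trans hT.2.2.1)

theorem WF.not_outer_middle (hT : (series l r).WF) : ¬ (series l r).Outer l.tgt := by
  intro h
  rcases h (Or.inl l.tgt_mem_verts) with h | h
  · exact hT.1.src_ne_tgt h.symm
  · exact hT.2.1.src_ne_tgt (hT.2.2.1.symm.trans h)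

theorem WF.not_reachable_middle (hT : (series l r).WF) (hG : (series l r).Avoids G)
    (hx : (series l r).Outer x) : ¬ G.Reachable x l.tgt := by
  intro h
  have isolated : ∀ y, ¬ G.Adj l.tgt y := fun y hy => hT.not_outer_middle (hG hy)
  obtain rfl := (reachable_iff_eq_of_isolated isolated).1 h.symm
  exact hT.not_outer_middle hx

theorem outer_parallel_left (hx : (parallel l r).Outer x) : l.Outer x := fun h => hx (Or.inl h)

theorem WF.outer_parallel_right (hT : (parallel l r).WF) (hx : (parallel l r).Outer x) :
    r.Outer x := by
  intro h
  rw [← hT.2.2.1, ← hT.2.2.2.1]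
  exact hx (Or.inr h)

theorem WF.avoids_parallel_alive (hT : (parallel l r).WF) : r.Avoids (l.alive F S) := by
  intro x y hxy hx
  rw [← hT.2.2.1, ← hT.2.2.2.1]
  exact hT.eq_or_eq_of_mem (mem_verts_of_alive_adj hxy) hx

theorem WF.reachable_sup_alive (hT : T.WF) (hG : T.Avoids G) (hx : T.Outer x) (hy : T.Outer y) :
    (G ⊔ T.alive F S).Reachable x y ↔
      (G ⊔ condEdge (T.conn F S) T.src T.tgt).Reachable x y := by
  induction T generalizing G x y with
  | edge u v => rfl
  | series l r hl hr =>
    have avoids_right : r.Avoids (G ⊔ l.alive F S) :=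
      Avoids.sup (fun _ _ h => hT.outer_series_right (hG h)) hT.avoids_series_alive
    have avoids_left : l.Avoids (G ⊔ condEdge (r.conn F S) r.src r.tgt) :=
      Avoids.sup (fun _ _ h => hT.outer_series_left (hG h))
        (avoids_condEdge (hT.2.2.1 ▸ l.outer_tgt) hT.outer_left_tgt)
    rw [alive, ← sup_assoc, hr hT.2.1 avoids_right (hT.outer_series_right hx)
      (hT.outer_series_right hy), sup_right_comm,
      hl hT.1 avoids_left (hT.outer_series_left hx) (hT.outer_series_left hy)]
    have hxm := hT.not_reachable_middle hG hx
    have hmy := mt Reachable.symm (hT.not_reachable_middle hG hy)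
    have hsm := hT.not_reachable_middle hG (outer_src _)
    have hms := mt Reachable.symm hsm
    simp only [src] at hsm hms
    simp only [reachable_sup_condEdge, ← hT.2.2.1, hmy, hxm, hsm, hms, conn, src, tgt,
      Bool.and_eq_true, Reachable.refl]
    cases l.conn F S <;> cases r.conn F S <;> simp
  | parallel l r hl hr =>
    have avoids_right : r.Avoids (G ⊔ l.alive F S) :=
      Avoids.sup (fun _ _ h => hT.outer_parallel_right (hG h)) hT.avoids_parallel_alive
    have avoids_left : l.Avoids (G ⊔ condEdge (r.conn F S) r.src r.tgt) :=
      Avoids.sup (fun _ _ h => outer_parallel_left (hG h))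
        (avoids_condEdge (hT.2.2.1 ▸ l.outer_src) (hT.2.2.2.1 ▸ l.outer_tgt))
    rw [alive, ← sup_assoc, hr hT.2.1 avoids_right (hT.outer_parallel_right hx)
      (hT.outer_parallel_right hy), sup_right_comm,
      hl hT.1 avoids_left (outer_parallel_left hx) (outer_parallel_left hy), ← hT.2.2.1,
      ← hT.2.2.2.1, sup_assoc, sup_comm (condEdge _ _ _), condEdge_sup_condEdge]
    rfl

theorem WF.mem_eq_false_of_conn (hT : T.WF) (h : T.conn F S = true) :
    mem S T.src = false ∧ mem S T.tgt = false :=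
  (T.profiles F).sound (h ▸ hT.profiles_of_set F S)

theorem WF.reach_middle (hT : (series l r).WF) (hG : (series l r).Avoids G) :
    reach (G ⊔ l.alive F S) l.tgt r.tgt = (l.conn F S && reach G l.src r.tgt) := by
  have hm : ¬ G.Reachable l.tgt r.tgt :=
    mt Reachable.symm (hT.not_reachable_middle hG (outer_tgt _))
  rw [Bool.eq_iff_iff, Bool.and_eq_true, reach_eq_true_iff, reach_eq_true_iff,
    hT.1.reachable_sup_alive (fun _ _ h => hT.outer_series_left (hG h)) l.outer_tgt
      hT.outer_left_tgt, reachable_sup_condEdge]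
  have := Reachable.refl (G := G) l.tgt
  tauto

theorem WF.reach_sup_alive (hT : T.WF) (hG : T.Avoids G) :
    reach (G ⊔ T.alive F S) T.src T.tgt = (T.conn F S || reach G T.src T.tgt) := by
  rw [Bool.eq_iff_iff, Bool.or_eq_true, reach_eq_true_iff, reach_eq_true_iff,
    hT.reachable_sup_alive hG T.outer_src T.outer_tgt, reachable_sup_condEdge]
  have hs := Reachable.refl (G := G) T.src
  have ht := Reachable.refl (G := G) T.tgt
  tauto

theorem toNat_mem_add_toNat_mem_compl (S : Set V) (x : V) :
    (mem S x).toNat + (mem Sᶜ x).toNat = 1 := by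
  by_cases h : x ∈ S <;> simp [mem, h]

/-- The effect on the number of components of gluing `T` to the remaining graph `G`. All inner
vertices of `T` are isolated in `G`, so gluing replaces those outside `S` by the pieces of `T`, and
it merges the components of the terminals if `T` is the first to connect these. -/
def GluesTo (T : SPTree V) (F : Set (Sym2 V)) (S : Set V) (G : SimpleGraph V) : Prop :=
  Nat.card G.ConnectedComponent + T.pieces F S + (mem Sᶜ T.src).toNat + (mem Sᶜ T.tgt).toNat =
    Nat.card (G ⊔ T.alive F S).ConnectedComponent + (T.verts ∩ Sᶜ).ncard +
      (T.conn F S && !reach G T.src T.tgt).toNat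

theorem WF.gluesTo_edge [Finite V] {u v : V} (hT : (edge u v).WF) : (edge u v).GluesTo F S G := by
  have := card_connectedComponent_sup_condEdge (G := G) (u := u) (v := v) ((edge u v).conn F S)
  simp only [GluesTo, hT.ncard_inter_edge, pieces, alive, src, tgt]
  omega

theorem WF.gluesTo_series [Finite V] (hT : (series l r).WF) (hG : (series l r).Avoids G)
    (hl : l.GluesTo F S G) (hr : r.GluesTo F S (G ⊔ l.alive F S)) :
    (series l r).GluesTo F S G := by
  have hn := hT.ncard_inter_series Sᶜ
  have hk := toNat_mem_add_toNat_mem_compl S l.tgt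
  have hsm : reach G l.src l.tgt = false :=
    reach_eq_false_iff.2 (hT.not_reachable_middle hG (outer_src _))
  have cl (h : l.conn F S = true) : mem S l.tgt = false := (hT.1.mem_eq_false_of_conn h).2
  have cr (h : r.conn F S = true) : mem S l.tgt = false :=
    hT.2.2.1 ▸ (hT.2.1.mem_eq_false_of_conn h).1
  rw [GluesTo, hsm] at hl
  rw [GluesTo, ← hT.2.2.1, hT.reach_middle hG] at hr
  simp only [GluesTo, alive, ← sup_assoc, pieces, src, tgt, conn]
  revert hl hr cl cr hk hn
  generalize l.conn F S = c₁, r.conn F S = c₂, reach G l.src r.tgt = b, mem S l.tgt = k,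
    mem Sᶜ l.tgt = k'
  cases c₁ <;> cases c₂ <;> cases b <;> cases k <;> cases k' <;> simp <;> omega

theorem WF.gluesTo_parallel [Finite V] (hT : (parallel l r).WF) (hG : (parallel l r).Avoids G)
    (hl : l.GluesTo F S G) (hr : r.GluesTo F S (G ⊔ l.alive F S)) :
    (parallel l r).GluesTo F S G := by
  have hn := hT.ncard_inter_parallel Sᶜ
  rw [GluesTo] at hl
  rw [GluesTo, ← hT.2.2.1, ← hT.2.2.2.1,
    hT.1.reach_sup_alive fun _ _ h => outer_parallel_left (hG h)] at hr
  simp only [GluesTo, alive, ← sup_assoc, pieces, src, tgt, conn]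
  revert hl hr
  generalize l.conn F S = c₁, r.conn F S = c₂, reach G l.src l.tgt = b
  cases c₁ <;> cases c₂ <;> cases b <;> simp <;> omega

theorem WF.gluesTo [Finite V] (hT : T.WF) (hG : T.Avoids G) : T.GluesTo F S G := by
  induction T generalizing G with
  | edge u v => exact hT.gluesTo_edge
  | series l r hl hr =>
    exact hT.gluesTo_series hG (hl hT.1 fun _ _ h => hT.outer_series_left (hG h))
      (hr hT.2.1 (Avoids.sup (fun _ _ h => hT.outer_series_right (hG h)) hT.avoids_series_alive))
  | parallel l r hl hr =>
    exact hT.gluesTo_parallel hG (hl hT.1 fun _ _ h => outer_parallel_left (hG h))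
      (hr hT.2.1
        (Avoids.sup (fun _ _ h => hT.outer_parallel_right (hG h)) hT.avoids_parallel_alive))

end SPTree

/-! ### Toughness one half -/

section Toughness

variable {V : Type*} {G : SimpleGraph V} {S : Set V}

theorem bddBelow_cutset_ratios (G : SimpleGraph V) :
    BddBelow {r : ℝ | ∃ S : Set V, IsCutset G S ∧ r = (S.ncard : ℝ) / (numComp G S : ℝ)} :=
  ⟨0, by rintro _ ⟨S, -, rfl⟩; positivity⟩

theorem IsCutset.toughness_le (h : IsCutset G S) :
    toughness G ≤ (S.ncard : ℝ) / (numComp G S : ℝ) :=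
  csInf_le (bddBelow_cutset_ratios G) ⟨S, h, rfl⟩

theorem IsCutset.half_le_ratio_iff (h : IsCutset G S) :
    (1 / 2 : ℝ) ≤ (S.ncard : ℝ) / (numComp G S : ℝ) ↔ numComp G S ≤ 2 * S.ncard := by
  have : (0 : ℝ) < numComp G S := by exact_mod_cast zero_lt_one.trans h
  rw [le_div_iff₀ this, ← Nat.cast_le (α := ℝ)]
  push_cast
  constructor <;> intro h <;> linarith

theorem half_le_toughness_iff (hc : ∃ S, IsCutset G S) :
    1 / 2 ≤ toughness G ↔ ∀ S, numComp G S ≤ max 1 (2 * S.ncard) := by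
  simp only [le_max_iff]
  constructor
  · refine fun h S => or_iff_not_imp_left.2 fun hS => ?_
    have hS : IsCutset G S := not_le.1 hS
    exact hS.half_le_ratio_iff.1 (h.trans hS.toughness_le)
  · intro h
    obtain ⟨S, hS⟩ := hc
    refine le_csInf ⟨_, S, hS, rfl⟩ ?_
    rintro _ ⟨S, hS, rfl⟩
    exact hS.half_le_ratio_iff.2 ((h S).resolve_left hS.not_ge)

theorem IsCutset.toughness_le_half (h : IsCutset G S) (hS : numComp G S = 2 * S.ncard) :
    toughness G ≤ 1 / 2 := by
  have hpos : (0 : ℝ) < S.ncard := by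
    rw [IsCutset, hS] at h
    exact_mod_cast (by omega : 0 < S.ncard)
  refine h.toughness_le.trans (le_of_eq ?_)
  rw [hS]
  push_cast
  field_simp

/-- The infimum of the empty set of reals is `0`. -/
theorem exists_isCutset_of_toughness_ne_zero (hG : toughness G ≠ 0) : ∃ S, IsCutset G S := by
  by_contra! h
  refine hG ?_
  have : {r : ℝ | ∃ S : Set V, IsCutset G S ∧ r = (S.ncard : ℝ) / (numComp G S : ℝ)} = ∅ :=
    Set.eq_empty_of_forall_notMem fun r ⟨S, hS, _⟩ => h S hS
  rw [toughness, this, Real.sInf_empty]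

theorem MinTough.exists_isCutset {t : ℝ} (hG : MinTough G t) (ht : t ≠ 0) : ∃ S, IsCutset G S :=
  exists_isCutset_of_toughness_ne_zero (hG.1.trans_ne ht)

theorem IsCutset.deleteEdges [Finite V] (h : IsCutset G S) (F : Set (Sym2 V)) :
    IsCutset (G.deleteEdges F) S :=
  lt_of_lt_of_le h (ConnectedComponent.card_le_card_of_le
    (SimpleGraph.comap_monotone _ (G.deleteEdges_le F)))

end Toughness

theorem card_connectedComponent_bot (V : Type*) :
    Nat.card (⊥ : SimpleGraph V).ConnectedComponent = Nat.card V :=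
  (Nat.card_congr (Equiv.ofBijective (connectedComponentMk ⊥) ⟨fun _ _ hxy =>
    reachable_bot.1 (ConnectedComponent.exact hxy), Quot.mk_surjective⟩)).symm

namespace RepresentsSP

open SPTree Profiles

variable {V : Type*} {G : SimpleGraph V} {T : SPTree V} {F : Set (Sym2 V)}

theorem edgeSet (h : RepresentsSP G T) : G.edgeSet = T.edges := by
  rw [h.2.2, edgeSet_fromEdgeSet, sdiff_eq_left, Set.disjoint_left]
  exact fun e he => h.1.not_isDiag he

theorem exists_ncard_neighborSet_eq_one (h : RepresentsSP G T) (hT : IsPearlNecklace T) :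
    ∃ w, (G.neighborSet w).ncard = 1 := by
  obtain ⟨u, v, r, rfl, -⟩ := hT
  refine ⟨u, Set.ncard_eq_one.2 ⟨v, Set.ext fun w => ?_⟩⟩
  have huv : u ≠ v := h.1.1
  rw [mem_neighborSet, h.2.2, fromEdgeSet_adj, Set.mem_singleton_iff]
  constructor
  · rintro ⟨he | he, -⟩
    · exact Sym2.congr_right.1 he
    · exact (huv (h.1.eq_of_mem (Or.inl rfl)
        (mem_verts_of_mem_edges he (Sym2.mem_mk_left u w)))).elim
  · rintro rfl
    exact ⟨Or.inl rfl, huv⟩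

variable [Finite V]

theorem ncard_eq (h : RepresentsSP G T) (S : Set V) : S.ncard =
    T.cuts S + (mem S T.src).toNat + (mem S T.tgt).toNat := by
  rw [← h.1.ncard_inter, h.2.1, Set.univ_inter]

theorem numComp_add_conn (h : RepresentsSP G T) (F : Set (Sym2 V)) (S : Set V) :
    numComp (G.deleteEdges F) S + (T.conn F S).toNat =
      T.pieces F S + (!mem S T.src).toNat + (!mem S T.tgt).toNat := by
  have glue : T.GluesTo F S ⊥ := h.1.gluesTo fun _ _ => False.elim
  have isolate : numComp (G.deleteEdges F) S + S.ncard =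
      Nat.card (T.alive F S).ConnectedComponent := by
    refine numComp_add_ncard fun x y => ?_
    rw [alive_adj, deleteEdges_adj, h.2.2, fromEdgeSet_adj]
    tauto
  have apart : reach (⊥ : SimpleGraph V) T.src T.tgt = false :=
    reach_eq_false_iff.2 fun h' => h.1.src_ne_tgt (reachable_bot.1 h')
  have mem_compl (x : V) : mem Sᶜ x = !mem S x := by
    by_cases hx : x ∈ S <;> simp [mem, hx]
  have := Set.ncard_add_ncard_compl S
  rw [GluesTo, bot_sup_eq, card_connectedComponent_bot, h.2.1, Set.univ_inter, apart,
    Bool.not_false, Bool.and_true, mem_compl, mem_compl] at glue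
  omega

theorem numComp_eq (h : RepresentsSP G T) (F : Set (Sym2 V)) (S : Set V) :
    (numComp (G.deleteEdges F) S : ℤ) = 2 * S.ncard + T.gain F S + (!mem S T.src).toInt +
      (!mem S T.tgt).toInt - (T.conn F S).toInt - 2 * (mem S T.src).toInt -
      2 * (mem S T.tgt).toInt := by
  have hc := h.numComp_add_conn F S
  rw [h.ncard_eq S, gain]
  revert hc
  generalize mem S T.src = i, mem S T.tgt = j, T.conn F S = c
  cases i <;> cases j <;> cases c <;> simp <;> omega

theorem ncard_pos (h : RepresentsSP G T) (S : Set V) :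
    decide (0 < S.ncard) = (decide (0 < T.cuts S) || mem S T.src || mem S T.tgt) := by
  rw [h.ncard_eq S]
  cases mem S T.src <;> cases mem S T.tgt <;> simp

theorem tough_iff (h : RepresentsSP G T) : Tough (T.profiles F) isolated ↔
    ∀ S, numComp (G.deleteEdges F) S ≤ max 1 (2 * S.ncard) := by
  have bound (S : Set V) : (max 1 (2 * S.ncard) : ℕ) =
      2 * S.ncard + (!decide (0 < S.ncard)).toInt := by
    rcases S.ncard.eq_zero_or_pos with h₀ | h₀
    · simp [h₀]
    · rw [max_eq_right (by omega), decide_eq_true h₀]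
      simp
  constructor
  · intro hT S
    have := hT (h.1.profiles_of_set F S) ⟨rfl, rfl, rfl⟩
    rw [Bool.false_and, Bool.false_and, Bool.or_false, Bool.or_false, ← h.ncard_pos S] at this
    rw [← Nat.cast_le (α := ℤ), bound, h.numComp_eq F S]
    linarith
  · rintro hG i j c t w _ _ _ hX ⟨rfl, rfl, rfl⟩
    obtain ⟨S, -, rfl, rfl, rfl, rfl, rfl⟩ := h.1.exists_realizes hX
    have := hG S
    rw [← Nat.cast_le (α := ℤ), bound, h.numComp_eq F S] at this
    rw [Bool.false_and, Bool.false_and, Bool.or_false, Bool.or_false, ← h.ncard_pos S]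
    linarith

theorem tough_profiles_iff (h : RepresentsSP G T) (hc : ∃ S, IsCutset G S) :
    Tough (T.profiles F) isolated ↔ 1 / 2 ≤ toughness (G.deleteEdges F) := by
  obtain ⟨S, hS⟩ := hc
  rw [h.tough_iff, half_le_toughness_iff ⟨S, hS.deleteEdges F⟩]

theorem exists_isCutset_of_isPearlNecklace (h : RepresentsSP G T) (hT : IsPearlNecklace T) :
    ∃ S, IsCutset G S ∧ numComp G S = 2 * S.ncard := by
  obtain ⟨S, -, hs, ht, hc, hpos, hw⟩ := h.1.exists_realizes hT.profiles_disconn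
  have hn := h.numComp_eq ∅ S
  have hp := h.ncard_pos S
  rw [hs, ht, hc, hw, deleteEdges_empty] at hn
  rw [hpos, Bool.true_or, Bool.true_or, decide_eq_true_eq] at hp
  replace hn : numComp G S = 2 * S.ncard := by
    simp only [Bool.not_false, Bool.toInt_true, Bool.toInt_false] at hn
    omega
  exact ⟨S, by rw [IsCutset]; omega, hn⟩

theorem minTough_of_isPearlNecklace (h : RepresentsSP G T) (hT : IsPearlNecklace T) :
    MinTough G (1 / 2) := by
  obtain ⟨S, hS, hn⟩ := h.exists_isCutset_of_isPearlNecklace hT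
  refine ⟨le_antisymm (hS.toughness_le_half hn) ?_, fun e he => not_le.1 fun hle => ?_⟩
  · simpa only [deleteEdges_empty] using (h.tough_profiles_iff ⟨S, hS⟩).1 hT.tough
  · exact hT.not_tough h.1 (h.edgeSet ▸ he) ((h.tough_profiles_iff ⟨S, hS⟩).2 hle)

theorem critical (h : RepresentsSP G T) (hG : MinTough G (1 / 2)) : T.Critical isolated where
  wf := h.1
  goodEnv := goodEnv_isolated
  tough := (h.tough_profiles_iff (hG.exists_isCutset (by norm_num))).2 <| by
    rw [deleteEdges_empty, hG.1]
  not_tough e he hT := (hG.2 e (h.edgeSet ▸ he)).not_ge <|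
    (h.tough_profiles_iff (hG.exists_isCutset (by norm_num))).1 hT

theorem ne_edge (h : RepresentsSP G T) (hc : ∃ S, IsCutset G S) (u v : V) : T ≠ .edge u v := by
  rintro rfl
  obtain ⟨S, hS⟩ := hc
  have hn := h.numComp_add_conn ∅ S
  rw [IsCutset] at hS
  simp only [deleteEdges_empty, conn, pieces, src, tgt] at hn
  revert hn
  cases mem S u <;> cases mem S v <;> simp <;> omega

theorem exists_isPearlNecklace (h : RepresentsSP G T) (hG : MinTough G (1 / 2)) :
    ∃ T', RepresentsSP G T' ∧ IsPearlNecklace T' := by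
  obtain ⟨T', hseq, hwf, same⟩ := (h.critical hG).isPearlChain.exists_isBeadSeq h.1
  have h' : RepresentsSP G T' :=
    ⟨hwf, same.verts_eq.trans h.2.1, same.edges_eq ▸ h.2.2⟩
  refine ⟨T', h', hseq.isPearlNecklace hwf (h'.ne_edge (hG.exists_isCutset (by norm_num))) ?_⟩
  rintro ⟨e, he, hb⟩
  exact (h'.critical hG).not_tough e he hb.tough_isolated

end RepresentsSP

/-- A series-parallel graph `G` is minimally 1/2-tough if and only if it is a series
connection of pearls and at least two single edges with the first and last constituents
being edges. Consequently, every minimally 1/2-tough series-parallel graph has a vertex of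
degree 1. -/
theorem minTough_half_iff_pearlNecklace {V : Type*} [Fintype V]
    (G : SimpleGraph V) (hsp : IsSPGraph G) :
    (MinTough G (1 / 2) ↔ ∃ T : SPTree V, RepresentsSP G T ∧ IsPearlNecklace T) ∧
    (MinTough G (1 / 2) → ∃ w : V, (G.neighborSet w).ncard = 1) := by
  obtain ⟨T, hT⟩ := hsp
  refine ⟨⟨hT.exists_isPearlNecklace, fun ⟨T', h, hn⟩ => h.minTough_of_isPearlNecklace hn⟩,
    fun hG => ?_⟩
  obtain ⟨T', h, hn⟩ := hT.exists_isPearlNecklace hG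
  exact h.exists_ncard_neighborSet_eq_one hn
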